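/- arXiv:1406.5158 — 4 statements merged into one kernel-verified Lean document; each statement's English description precedes it below -/
import Mathlib

section
/- For all integers m and n, the Heisenberg operators on the neutral fermion Fock space satisfy h_m ∘ h_n − h_n ∘ h_m = m · δ_{m+n,0} · id_F. (Hence the h_n generate a representation of the Heisenberg algebra H_ℤ on F.) -/
noncomputable section

/-- The neutral fermion Fock space `F = F^{⊗1/2}`: the complex vector space with
basis `{e_S : S a finite subset of ℕ}`. -/
abbrev FockD : Type := Finset ℕ →₀ ℂ

/-- Basis vector `e_S`. -/
def eD (S : Finset ℕ) : FockD := Finsupp.single S 1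

/-- Action of the fermion mode `a_m` on the basis vector `e_S`. -/
def aVec (m : ℤ) (S : Finset ℕ) : FockD :=
  if 0 ≤ m then
    if m.toNat ∈ S then 0
    else ((-1 : ℂ) ^ (S.filter (fun s => m.toNat < s)).card) • eD (insert m.toNat S)
  else
    if (-m - 1).toNat ∈ S then
      ((-1 : ℂ) ^ (S.filter (fun s => (-m - 1).toNat < s)).card) • eD (S.erase ((-m - 1).toNat))
    else 0

/-- The fermion mode `a_m` as a linear operator on `F`. -/
def aOp (m : ℤ) : FockD →ₗ[ℂ] FockD :=
  Finsupp.lsum ℂ fun S => LinearMap.toSpanSingleton ℂ FockD (aVec m S)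

/-- Fermionic normal ordered product `:a_i a_j:`. -/
def NO (i j : ℤ) : FockD →ₗ[ℂ] FockD :=
  if 0 ≤ i then (aOp i).comp (aOp j) else -((aOp j).comp (aOp i))

/-- Heisenberg operator `h_n = (1/2) ∑_{i∈ℤ} (−1)^{i+1} :a_i a_{−2n−1−i}:`
(on each vector only finitely many summands are nonzero). -/
def hD (n : ℤ) (x : FockD) : FockD :=
  (1 / 2 : ℂ) • ∑ᶠ i : ℤ, ((-1 : ℂ) ^ (i + 1)) • NO i (-2 * n - 1 - i) x

/-- Virasoro operator `L^{1/2}_m = (1/2) ∑_{i∈ℤ} i · :a_i a_{−m−i−1}:`. -/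
def LhalfD (m : ℤ) (x : FockD) : FockD :=
  (1 / 2 : ℂ) • ∑ᶠ i : ℤ, (i : ℂ) • NO i (-m - i - 1) x

/-- 2-point Virasoro operator `L¹_n = (1/2) ∑_{j∈ℤ} :h_j h_{n−j}:`, where the bosonic
normal ordered product is `:h_j h_k: = h_j h_k` if `j ≤ k` and `h_k h_j` otherwise. -/
def L1D (n : ℤ) (x : FockD) : FockD :=
  (1 / 2 : ℂ) • ∑ᶠ j : ℤ, if j ≤ n - j then hD j (hD (n - j) x) else hD (n - j) (hD j x)

/-- Charge `c(S) = #{s ∈ S : s odd} − #{s ∈ S : s even}`. -/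
def chg (S : Finset ℕ) : ℤ :=
  ((S.filter fun s => Odd s).card : ℤ) - ((S.filter fun s => Even s).card : ℤ)

/-- Charge-`n` component `F_{(n)}`: the span of the `e_S` with `c(S) = n`. -/
def FockComp (n : ℤ) : Submodule ℂ FockD :=
  Submodule.span ℂ {x : FockD | ∃ S : Finset ℕ, chg S = n ∧ x = eD S}

/-- Index set of the vacuum-like vector `v_n`. -/
def vSet (n : ℤ) : Finset ℕ :=
  if 0 ≤ n then (Finset.range n.toNat).image fun i => 2 * i + 1
  else (Finset.range (-n).toNat).image fun i => 2 * i

/-- Vacuum-like vector `v_n` (`v_0 = e_∅`, `v_n = e_{{1,3,…,2n−1}}`,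
`v_{−n} = e_{{0,2,…,2n−2}}` for `n > 0`). -/
def vD (n : ℤ) : FockD := eD (vSet n)

/-! A mode `a_k` brackets with `h_n` to a multiple of `a_{k - 2n}`. Normal ordering changes
`a_i a_j` only by a scalar, so bracketing `h_m` with the `i`-th summand of `2 h_n` gives
`c_{i - 2m} - c_i`, where `c_i = a_i a_{-2(m + n) - 1 - i}`. Were `c_i` normally ordered, the sum
over `i` would telescope to zero. Restoring the normal order costs `δ_{m + n, 0}` for each `i < 0`,
and the number of `i < 2m` exceeds the number of `i < 0` by `2m`; half of this excess is the
central term. -/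

section LocallyFiniteSum

variable {ι R V : Type*} [Ring R] [AddCommGroup V] [Module R V]

/-- A family of endomorphisms is locally finite if only finitely many of them act nontrivially on
any given vector, so that its sum makes sense although the index type may be infinite. -/
def IsLocallyFiniteFamily (f : ι → Module.End R V) : Prop :=
  ∀ x, (fun i => f i x).HasFiniteSupport

namespace IsLocallyFiniteFamily

variable {f : ι → Module.End R V}

/-- The pointwise sum of a locally finite family of endomorphisms. -/
def sum (hf : IsLocallyFiniteFamily f) : Module.End R V where
  toFun x := ∑ᶠ i, f i x
  map_add' x y := by
    simp only [map_add]
    exact finsum_add_distrib (hf x) (hf y)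
  map_smul' c x := by
    simp only [map_smul, RingHom.id_apply]
    exact (smul_finsum' c (hf x)).symm

theorem lie_sum_apply (hf : IsLocallyFiniteFamily f) (T : Module.End R V) (x : V) :
    ⁅T, hf.sum⁆ x = ∑ᶠ i, ⁅T, f i⁆ x := by
  have hT : (fun i => T (f i x)).HasFiniteSupport := (hf x).fun_comp (map_zero T)
  calc ⁅T, hf.sum⁆ x = T (∑ᶠ i, f i x) - ∑ᶠ i, f i (T x) := rfl
    _ = ∑ᶠ i, T (f i x) - ∑ᶠ i, f i (T x) := by rw [map_finsum T (hf x)]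
    _ = ∑ᶠ i, ⁅T, f i⁆ x := (finsum_sub_distrib hT (hf (T x))).symm

end IsLocallyFiniteFamily

end LocallyFiniteSum

section FiniteSupportSums

section Monoid

variable {M : Type*} [AddCommMonoid M]

theorem hasFiniteSupport_ite_eq {ι : Type*} [DecidableEq ι] (j : ι) (y : M) :
    (fun i => if i = j then y else 0).HasFiniteSupport :=
  (Set.finite_singleton j).subset fun _ hi => by_contra fun h => hi (if_neg h)

theorem finsum_ite_eq {ι : Type*} [DecidableEq ι] (j : ι) (y : M) :
    ∑ᶠ i, (if i = j then y else 0) = y := by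
  rw [finsum_eq_single _ j fun i hi => if_neg hi, if_pos rfl]

theorem hasFiniteSupport_ite_mem {ι : Type*} [DecidableEq ι] (s : Finset ι) (y : M) :
    (fun i => if i ∈ s then y else 0).HasFiniteSupport :=
  s.finite_toSet.subset fun _ hi => by_contra fun h => hi (if_neg h)

theorem finsum_ite_mem {ι : Type*} [DecidableEq ι] (s : Finset ι) (y : M) :
    ∑ᶠ i, (if i ∈ s then y else 0) = s.card • y := by
  have hs : (Function.support fun i => if i ∈ s then y else 0) ⊆ s :=
    fun _ hi => by_contra fun h => hi (if_neg h)
  rw [finsum_eq_sum_of_support_subset _ hs, Finset.sum_ite_mem, Finset.inter_self, Finset.sum_const]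

end Monoid

section Group

variable {M : Type*} [AddCommGroup M]

theorem ite_lt_sub_ite_lt (b c i : ℤ) (y : M) :
    ((if i < c then y else 0) - if i < b then y else 0) =
      (if i ∈ Finset.Ico b c then y else 0) - if i ∈ Finset.Ico c b then y else 0 := by
  simp only [Finset.mem_Ico]
  grind

theorem hasFiniteSupport_ite_lt_sub_ite_lt (b c : ℤ) (y : M) :
    (fun i : ℤ => (if i < c then y else 0) - if i < b then y else 0).HasFiniteSupport := by
  simp only [ite_lt_sub_ite_lt]
  exact (hasFiniteSupport_ite_mem _ y).sub (hasFiniteSupport_ite_mem _ y)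

theorem finsum_ite_lt_sub_ite_lt (b c : ℤ) (y : M) :
    ∑ᶠ i : ℤ, ((if i < c then y else 0) - if i < b then y else 0) = (c - b) • y := by
  simp only [ite_lt_sub_ite_lt]
  rw [finsum_sub_distrib (hasFiniteSupport_ite_mem _ y) (hasFiniteSupport_ite_mem _ y),
    finsum_ite_mem, finsum_ite_mem, Int.card_Ico, Int.card_Ico, ← natCast_zsmul, ← natCast_zsmul,
    ← sub_smul]
  congr 1
  omega

theorem finsum_comp_sub_sub_eq_zero {g : ℤ → M} (hg : g.HasFiniteSupport) (d : ℤ) :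
    ∑ᶠ i, (g (i - d) - g i) = 0 := by
  have hshift : (fun i => g (i - d)).HasFiniteSupport :=
    hg.fun_comp_of_injective (Equiv.subRight d).injective
  rw [finsum_sub_distrib hshift hg, sub_eq_zero]
  exact finsum_comp_equiv (Equiv.subRight d)

end Group

end FiniteSupportSums

section SignParity

variable {K : Type*} [DivisionRing K]

theorem neg_one_zpow_sub_two_mul_add_one (k n : ℤ) :
    (-1 : K) ^ (k - 2 * n + 1) = (-1) ^ (k + 1) := by
  simp only [neg_one_zpow_eq_ite]
  grind

theorem neg_one_zpow_mul_self (i : ℤ) : (-1 : K) ^ i * (-1) ^ i = 1 := by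
  rw [← zpow_add₀ (neg_ne_zero.mpr one_ne_zero), Even.neg_one_zpow ⟨i, rfl⟩]

end SignParity

section NeutralFermion

attribute [local instance] LieRing.ofAssociativeRing

section CliffordModes

variable {R V : Type*} [Ring R] [AddCommGroup V] [Module R V]

/-- Modes of a neutral fermion: operators satisfying the Clifford relations, such that any given
vector is annihilated by all modes of sufficiently negative index. -/
structure IsNeutralFermion (a : ℤ → Module.End R V) : Prop where
  anticomm : ∀ i j, a i * a j + a j * a i = if i + j = -1 then 1 else 0
  eventually_apply_eq_zero : ∀ x, ∀ᶠ i in Filter.atBot, a i x = 0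

/-- The fermionic normal ordered product `:a_i a_j:`; for the modes `aOp` it is `NO i j` by
definition. -/
def normalOrdered (a : ℤ → Module.End R V) (i j : ℤ) : Module.End R V :=
  if 0 ≤ i then a i * a j else -(a j * a i)

namespace IsNeutralFermion

variable {a : ℤ → Module.End R V}

theorem mul_eq_normalOrdered_add (ha : IsNeutralFermion a) (i j : ℤ) :
    a i * a j = normalOrdered a i j + if i < 0 then if i + j = -1 then 1 else 0 else 0 := by
  rw [normalOrdered]
  by_cases hi : 0 ≤ i
  · rw [if_pos hi, if_neg hi.not_gt, add_zero]
  · have hcar := ha.anticomm i j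
    rw [if_neg hi, if_pos (not_le.mp hi), neg_add_eq_sub, eq_sub_iff_add_eq, hcar]

theorem lie_normalOrdered (ha : IsNeutralFermion a) (T : Module.End R V) (i j : ℤ) :
    ⁅T, normalOrdered a i j⁆ = ⁅T, a i⁆ * a j + a i * ⁅T, a j⁆ := by
  have hscalar : ⁅T, (if i < 0 then if i + j = -1 then 1 else 0 else 0 : Module.End R V)⁆ = 0 := by
    split_ifs <;> simp [Ring.lie_def]
  rw [← add_zero ⁅T, normalOrdered a i j⁆, ← hscalar, ← lie_add, ← ha.mul_eq_normalOrdered_add]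
  simp only [Ring.lie_def]
  noncomm_ring

theorem mode_lie_normalOrdered (ha : IsNeutralFermion a) (i j k : ℤ) :
    ⁅a k, normalOrdered a i j⁆ =
      (if i + k = -1 then a j else 0) - if j + k = -1 then a i else 0 := by
  calc ⁅a k, normalOrdered a i j⁆
      = (a i * a k + a k * a i) * a j - a i * (a j * a k + a k * a j) := by
        rw [ha.lie_normalOrdered, Ring.lie_def, Ring.lie_def]
        noncomm_ring
    _ = _ := by
        rw [ha.anticomm, ha.anticomm]
        simp only [ite_mul, mul_ite, one_mul, mul_one, zero_mul, mul_zero]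

theorem hasFiniteSupport_normalOrdered (ha : IsNeutralFermion a) (p : ℤ) (x : V) :
    (fun i => normalOrdered a i (p - i) x).HasFiniteSupport := by
  suffices h : ∀ᶠ i in Filter.cofinite, normalOrdered a i (p - i) x = 0 from
    Filter.eventually_cofinite.mp h
  rw [Int.cofinite_eq, Filter.eventually_sup]
  constructor
  · filter_upwards [ha.eventually_apply_eq_zero x, Filter.eventually_lt_atBot 0] with i hx hi
    simp [normalOrdered, hi.not_ge, hx]
  · have hreflect : Filter.Tendsto (fun i : ℤ => p - i) Filter.atTop Filter.atBot :=
      Filter.tendsto_atBot_add_const_left _ p Filter.tendsto_neg_atTop_atBot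
    filter_upwards [hreflect.eventually (ha.eventually_apply_eq_zero x),
      Filter.eventually_ge_atTop 0] with i hx hi
    simp [normalOrdered, hi, hx]

end IsNeutralFermion

end CliffordModes

section HeisenbergOperators

variable {K V : Type*} [Field K] [AddCommGroup V] [Module K V]

/-- The `i`-th summand of `2 h_n`. -/
def heisenbergTerm (a : ℤ → Module.End K V) (n i : ℤ) : Module.End K V :=
  (-1 : K) ^ (i + 1) • normalOrdered a i (-2 * n - 1 - i)

namespace IsNeutralFermion

variable {a : ℤ → Module.End K V}

theorem isLocallyFiniteFamily_heisenbergTerm (ha : IsNeutralFermion a) (n : ℤ) :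
    IsLocallyFiniteFamily (heisenbergTerm a n) := fun x =>
  (ha.hasFiniteSupport_normalOrdered (-2 * n - 1) x).smul_right _

/-- The Heisenberg operator `h_n` built from the modes `a`; for the modes `aOp` it is `hD n` by
definition. -/
def heisenberg (ha : IsNeutralFermion a) (n : ℤ) : Module.End K V :=
  (1 / 2 : K) • (ha.isLocallyFiniteFamily_heisenbergTerm n).sum

theorem lie_heisenberg_apply (ha : IsNeutralFermion a) (T : Module.End K V) (n : ℤ) (x : V) :
    ⁅T, ha.heisenberg n⁆ x = (1 / 2 : K) • ∑ᶠ i, ⁅T, heisenbergTerm a n i⁆ x := by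
  rw [heisenberg, lie_smul, LinearMap.smul_apply, IsLocallyFiniteFamily.lie_sum_apply]

theorem mode_lie_heisenbergTerm (ha : IsNeutralFermion a) (n k i : ℤ) :
    ⁅a k, heisenbergTerm a n i⁆ =
      (if i = -1 - k then (-1 : K) ^ k • a (k - 2 * n) else 0) +
        if i = k - 2 * n then (-1 : K) ^ k • a (k - 2 * n) else 0 := by
  rw [heisenbergTerm, lie_smul, ha.mode_lie_normalOrdered, smul_sub, sub_eq_add_neg]
  congr 1
  · by_cases hi : i = -1 - k
    · subst hi
      rw [if_pos (by ring), if_pos rfl, show -1 - k + 1 = -k by ring, zpow_neg, ← inv_zpow,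
        inv_neg_one, show -2 * n - 1 - (-1 - k) = k - 2 * n by ring]
    · rw [if_neg (by omega), if_neg hi, smul_zero]
  · by_cases hi : i = k - 2 * n
    · subst hi
      rw [if_pos (by ring), if_pos rfl, neg_one_zpow_sub_two_mul_add_one,
        zpow_add_one₀ (neg_ne_zero.mpr one_ne_zero), mul_neg_one, neg_smul, neg_neg]
    · rw [if_neg (by omega), if_neg hi, smul_zero, neg_zero]

theorem heisenberg_lie_mode [NeZero (2 : K)] (ha : IsNeutralFermion a) (n k : ℤ) :
    ⁅ha.heisenberg n, a k⁆ = (-1 : K) ^ (k + 1) • a (k - 2 * n) := by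
  have hlie : ⁅a k, ha.heisenberg n⁆ = (-1 : K) ^ k • a (k - 2 * n) := by
    ext x
    set y := ((-1 : K) ^ k • a (k - 2 * n)) x
    have hterm (i : ℤ) : ⁅a k, heisenbergTerm a n i⁆ x =
        (if i = -1 - k then y else 0) + if i = k - 2 * n then y else 0 := by
      rw [ha.mode_lie_heisenbergTerm, LinearMap.add_apply]
      split_ifs <;> rfl
    simp only [ha.lie_heisenberg_apply, hterm]
    rw [finsum_add_distrib (hasFiniteSupport_ite_eq _ y) (hasFiniteSupport_ite_eq _ y),
      finsum_ite_eq, finsum_ite_eq, ← two_smul K y, smul_smul, one_div,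
      inv_mul_cancel₀ two_ne_zero, one_smul]
  rw [← lie_skew, hlie, zpow_add_one₀ (neg_ne_zero.mpr one_ne_zero), mul_neg_one, neg_smul]

theorem heisenberg_lie_heisenbergTerm [NeZero (2 : K)] (ha : IsNeutralFermion a) (m n i : ℤ) :
    ⁅ha.heisenberg m, heisenbergTerm a n i⁆ =
      a (i - 2 * m) * a (-2 * (m + n) - 1 - (i - 2 * m)) - a i * a (-2 * (m + n) - 1 - i) := by
  set j := -2 * n - 1 - i
  have hsign : (-1 : K) ^ (j + 1) = -(-1) ^ (i + 1) := by
    simp only [j, neg_one_zpow_eq_ite]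
    grind
  rw [heisenbergTerm, lie_smul, ha.lie_normalOrdered, ha.heisenberg_lie_mode,
    ha.heisenberg_lie_mode, hsign, neg_smul, mul_neg, smul_mul_assoc, mul_smul_comm,
    ← sub_eq_add_neg, ← smul_sub, smul_smul, neg_one_zpow_mul_self, one_smul,
    show -2 * (m + n) - 1 - (i - 2 * m) = j by ring, show -2 * (m + n) - 1 - i = j - 2 * m by ring]

end IsNeutralFermion

theorem heisenberg_commutation_relations_general [NeZero (2 : K)] {a : ℤ → Module.End K V}
    (ha : IsNeutralFermion a) (m n : ℤ) :
    ⁅ha.heisenberg m, ha.heisenberg n⁆ = (m : K) • if m + n = 0 then 1 else 0 := by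
  ext x
  set g : ℤ → V := fun i => normalOrdered a i (-2 * (m + n) - 1 - i) x
  set y : V := (if m + n = 0 then 1 else 0 : Module.End K V) x
  have hg : g.HasFiniteSupport := ha.hasFiniteSupport_normalOrdered _ x
  have hmul (i : ℤ) :
      (a i * a (-2 * (m + n) - 1 - i)) x = g i + if i < 0 then y else 0 := by
    have hsum : i + (-2 * (m + n) - 1 - i) = -1 ↔ m + n = 0 := by omega
    rw [ha.mul_eq_normalOrdered_add, LinearMap.add_apply]
    simp only [hsum, g, y]
    split_ifs <;> rfl
  have hterm (i : ℤ) : ⁅ha.heisenberg m, heisenbergTerm a n i⁆ x =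
      (g (i - 2 * m) - g i) + ((if i < 2 * m then y else 0) - if i < 0 then y else 0) := by
    rw [ha.heisenberg_lie_heisenbergTerm, LinearMap.sub_apply, hmul, hmul, add_sub_add_comm]
    simp only [sub_neg]
  have hshift : (fun i => g (i - 2 * m) - g i).HasFiniteSupport :=
    (hg.fun_comp_of_injective (Equiv.subRight (2 * m)).injective).sub hg
  calc ⁅ha.heisenberg m, ha.heisenberg n⁆ x
    _ = (1 / 2 : K) • (0 + (2 * m - 0) • y) := by
        simp only [ha.lie_heisenberg_apply, hterm]
        rw [finsum_add_distrib hshift (hasFiniteSupport_ite_lt_sub_ite_lt 0 (2 * m) y),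
          finsum_comp_sub_sub_eq_zero hg, finsum_ite_lt_sub_ite_lt]
    _ = (m : K) • y := by
        rw [zero_add, sub_zero, ← Int.cast_smul_eq_zsmul K, smul_smul, Int.cast_mul, Int.cast_ofNat,
          one_div, inv_mul_cancel_left₀ two_ne_zero]

end HeisenbergOperators

end NeutralFermion

section FockSpace

open scoped symmDiff

/-- The site `t` at which the mode `a_m` creates (`m = t`) or annihilates (`m = -t - 1`) a
fermion. -/
def modeSite : ℤ → ℕ
  | .ofNat t => t
  | .negSucc t => t

/-- The sign picked up by moving a mode at the site `t` past the fermions of `e_S` at the sites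
above `t`. -/
def fermionSign (t : ℕ) (S : Finset ℕ) : ℂ := (-1) ^ (S.filter (t < ·)).card

theorem fermionSign_mul_self (t : ℕ) (S : Finset ℕ) : fermionSign t S * fermionSign t S = 1 := by
  rw [fermionSign, ← mul_pow, neg_one_mul, neg_neg, one_pow]

theorem fermionSign_insert {t u : ℕ} {S : Finset ℕ} (hu : u ∉ S) :
    fermionSign t (insert u S) = if t < u then -fermionSign t S else fermionSign t S := by
  rw [fermionSign, Finset.filter_insert]
  split_ifs
  · rw [Finset.card_insert_of_notMem fun h => hu (Finset.mem_of_mem_filter u h), pow_succ,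
      mul_neg_one, fermionSign]
  · rfl

theorem symmDiff_singleton_eq_ite {α : Type*} [DecidableEq α] (S : Finset α) (u : α) :
    S ∆ {u} = if u ∈ S then S.erase u else insert u S := by
  ext s
  grind [Finset.mem_symmDiff]

theorem fermionSign_symmDiff_singleton (t u : ℕ) (S : Finset ℕ) :
    fermionSign t (S ∆ {u}) = if t < u then -fermionSign t S else fermionSign t S := by
  rw [symmDiff_singleton_eq_ite]
  by_cases hu : u ∈ S
  · have h := fermionSign_insert (t := t) (Finset.notMem_erase u S)
    rw [Finset.insert_erase hu] at h
    grind
  · rw [if_neg hu, fermionSign_insert hu]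

theorem aVec_natCast (t : ℕ) (S : Finset ℕ) :
    aVec t S = if t ∈ S then 0 else fermionSign t S • eD (insert t S) :=
  if_pos (Int.natCast_nonneg t)

theorem aVec_negSucc (t : ℕ) (S : Finset ℕ) :
    aVec (Int.negSucc t) S = if t ∈ S then fermionSign t S • eD (S.erase t) else 0 := by
  have hsite : (-Int.negSucc t - 1).toNat = t := by omega
  rw [aVec, if_neg (Int.negSucc_lt_zero t).not_ge, hsite]
  rfl

theorem aOp_eD (m : ℤ) (S : Finset ℕ) :
    aOp m (eD S) = if modeSite m ∈ S ↔ m < 0 then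
      fermionSign (modeSite m) S • eD (S ∆ {modeSite m}) else 0 := by
  have hvec : aOp m (eD S) = aVec m S := by simp [aOp, eD]
  rw [hvec, symmDiff_singleton_eq_ite]
  cases m with
  | ofNat t =>
    by_cases ht : t ∈ S <;> simp [aVec_natCast, modeSite, ht]
  | negSucc t =>
    by_cases ht : t ∈ S <;> simp [aVec_negSucc, modeSite, ht]

theorem modeSite_eq_modeSite_iff (m n : ℤ) : modeSite m = modeSite n ↔ m = n ∨ m + n = -1 := by
  cases m <;> cases n <;> simp only [modeSite, Int.ofNat_eq_natCast] <;> omega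

theorem aOp_aOp_eD_of_modeSite_ne {m n : ℤ} (h : modeSite m ≠ modeSite n) (S : Finset ℕ) :
    aOp m (aOp n (eD S)) =
      if (modeSite m ∈ S ↔ m < 0) ∧ (modeSite n ∈ S ↔ n < 0) then
        (fermionSign (modeSite m) (S ∆ {modeSite n}) * fermionSign (modeSite n) S) •
          eD (S ∆ {modeSite n} ∆ {modeSite m}) else 0 := by
  have hmem : modeSite m ∈ S ∆ {modeSite n} ↔ modeSite m ∈ S := by
    simp [Finset.mem_symmDiff, h]
  by_cases hn : modeSite n ∈ S ↔ n < 0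
  · rw [aOp_eD n, if_pos hn, map_smul, aOp_eD, smul_ite, smul_zero, smul_smul, mul_comm]
    simp only [hmem, hn, and_true]
  · rw [aOp_eD n, if_neg hn, map_zero, if_neg fun hmn => hn hmn.2]

theorem aOp_aOp_eD_add_of_modeSite_ne {m n : ℤ} (h : modeSite m ≠ modeSite n) (S : Finset ℕ) :
    aOp m (aOp n (eD S)) + aOp n (aOp m (eD S)) = 0 := by
  have hsign : fermionSign (modeSite n) (S ∆ {modeSite m}) * fermionSign (modeSite m) S =
      -(fermionSign (modeSite m) (S ∆ {modeSite n}) * fermionSign (modeSite n) S) := by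
    rw [fermionSign_symmDiff_singleton, fermionSign_symmDiff_singleton]
    grind
  rw [aOp_aOp_eD_of_modeSite_ne h, aOp_aOp_eD_of_modeSite_ne h.symm, hsign, symmDiff_right_comm,
    neg_smul]
  grind

theorem aOp_aOp_eD_of_modeSite_eq {m n : ℤ} (h : modeSite m = modeSite n) (S : Finset ℕ) :
    aOp m (aOp n (eD S)) =
      if (modeSite n ∈ S ↔ n < 0) ∧ (modeSite n ∉ S ↔ m < 0) then eD S else 0 := by
  have hmem : modeSite n ∈ S ∆ {modeSite n} ↔ modeSite n ∉ S := by
    simp [Finset.mem_symmDiff]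
  have hsign : fermionSign (modeSite n) (S ∆ {modeSite n}) = fermionSign (modeSite n) S := by
    rw [fermionSign_symmDiff_singleton, if_neg (lt_irrefl _)]
  by_cases hn : modeSite n ∈ S ↔ n < 0
  · rw [aOp_eD n, if_pos hn, map_smul, aOp_eD, h, hsign, symmDiff_symmDiff_cancel_right,
      smul_ite, smul_zero, smul_smul, fermionSign_mul_self, one_smul]
    simp only [hmem, hn, true_and]
  · rw [aOp_eD n, if_neg hn, map_zero, if_neg fun hmn => hn hmn.1]

theorem aOp_anticomm (m n : ℤ) :
    aOp m * aOp n + aOp n * aOp m = if m + n = -1 then 1 else 0 := by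
  refine Finsupp.basisSingleOne.ext fun S => ?_
  have hbasis : aOp m (aOp n (eD S)) + aOp n (aOp m (eD S)) = if m + n = -1 then eD S else 0 := by
    have hiff := modeSite_eq_modeSite_iff m n
    by_cases h : modeSite m = modeSite n
    · rw [aOp_aOp_eD_of_modeSite_eq h, aOp_aOp_eD_of_modeSite_eq h.symm, h]
      grind
    · rw [aOp_aOp_eD_add_of_modeSite_ne h, if_neg fun hmn => h (hiff.mpr (.inr hmn))]
  rw [Finsupp.coe_basisSingleOne]
  refine hbasis.trans ?_
  split_ifs <;> rfl

theorem eventually_aOp_eD_eq_zero (S : Finset ℕ) : ∀ᶠ i in Filter.atBot, aOp i (eD S) = 0 := by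
  filter_upwards [Filter.eventually_lt_atBot 0,
    Filter.atBot_le_cofinite (S.image Int.negSucc).eventually_cofinite_notMem] with i hi hS
  rw [aOp_eD, if_neg]
  cases i with
  | ofNat t => exact absurd hi (Int.natCast_nonneg t).not_gt
  | negSucc t => exact fun h => hS (Finset.mem_image_of_mem _ (h.mpr hi))

theorem eventually_aOp_apply_eq_zero (x : FockD) : ∀ᶠ i in Filter.atBot, aOp i x = 0 := by
  induction x using Finsupp.induction_linear with
  | zero => simp
  | add x y hx hy =>
    filter_upwards [hx, hy] with i hxi hyi
    rw [map_add, hxi, hyi, add_zero]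
  | single S c =>
    filter_upwards [eventually_aOp_eD_eq_zero S] with i hi
    rw [← Finsupp.smul_single_one, map_smul]
    exact (congrArg (c • ·) hi).trans (smul_zero c)

theorem isNeutralFermion_aOp : IsNeutralFermion aOp where
  anticomm := aOp_anticomm
  eventually_apply_eq_zero := eventually_aOp_apply_eq_zero

end FockSpace

/-- The Heisenberg operators on the neutral fermion Fock space satisfy
`h_m ∘ h_n − h_n ∘ h_m = m · δ_{m+n,0} · id_F`. -/
theorem heisenberg_commutation_relations (m n : ℤ) (x : FockD) :
    hD m (hD n x) - hD n (hD m x) = (m : ℂ) • (if m + n = 0 then x else 0) := by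
  calc hD m (hD n x) - hD n (hD m x)
    _ = ((m : ℂ) • if m + n = 0 then 1 else 0 : Module.End ℂ FockD) x :=
      LinearMap.congr_fun (heisenberg_commutation_relations_general isNeutralFermion_aOp m n) x
    _ = (m : ℂ) • (if m + n = 0 then x else 0) := by split_ifs <;> rfl
end
end

section
/- For every finite subset S of ℕ, the basis vector e_S is a simultaneous eigenvector of h_0 and of L^{1/2}_0: one has h_0 e_S = (|{s ∈ S : s odd}| − |{s ∈ S : s even}|) · e_S and L^{1/2}_0 e_S = (∑_{s∈S} (s + 1/2)) · e_S. -/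
noncomputable section

/-!
Every term of the zero modes has the form `c(i) :a_i a_{-1-i}:`. For `t ∈ ℕ` the product
`a_t a_{-1-t}` is the projection onto the span of the `e_S` with `t ∈ S`, and normal ordering is
antisymmetric under `t ↔ -1 - t`. Hence the terms `i = t` and `i = -1 - t` combine to
`c(t) - c(-1-t)` times that projection, and the sum acts on `e_S` by
`∑_{s ∈ S} (c(s) - c(-1-s))`.
-/

theorem finsum_int_eq_sum_natCast_add_neg_one_sub {M : Type*} [AddCommMonoid M] {f : ℤ → M}
    {S : Finset ℕ} (h_natCast : ∀ t : ℕ, t ∉ S → f t = 0)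
    (h_neg_one_sub : ∀ t : ℕ, t ∉ S → f (-1 - t) = 0) :
    ∑ᶠ i, f i = ∑ t ∈ S, (f t + f (-1 - t)) := by
  have inl_eq (t : ℕ) : Equiv.intEquivNatSumNat.symm (Sum.inl t) = t := rfl
  have inr_eq (t : ℕ) : Equiv.intEquivNatSumNat.symm (Sum.inr t) = -1 - t := by
    change Int.negSucc t = -1 - t
    omega
  have support_subset : Function.support (f ∘ Equiv.intEquivNatSumNat.symm) ⊆ S.disjSum S := by
    rintro (t | t) ht
    · simpa using fun h => ht ((congrArg f (inl_eq t)).trans (h_natCast t h))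
    · simpa using fun h => ht ((congrArg f (inr_eq t)).trans (h_neg_one_sub t h))
  calc ∑ᶠ i, f i = ∑ᶠ x, (f ∘ Equiv.intEquivNatSumNat.symm) x :=
        (finsum_comp_equiv Equiv.intEquivNatSumNat.symm).symm
    _ = ∑ x ∈ S.disjSum S, (f ∘ Equiv.intEquivNatSumNat.symm) x :=
        finsum_eq_sum_of_support_subset _ support_subset
    _ = ∑ t ∈ S, (f t + f (-1 - t)) := by
        simp only [Finset.sum_disjSum, Function.comp_apply, inl_eq, inr_eq, Finset.sum_add_distrib]

theorem neg_one_zpow_neg {R : Type*} [DivisionMonoid R] [HasDistribNeg R] (n : ℤ) :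
    (-1 : R) ^ (-n) = (-1) ^ n := by
  rw [← inv_zpow', inv_neg_one]

theorem aOp_eD_s1 (m : ℤ) (S : Finset ℕ) : aOp m (eD S) = aVec m S := by
  simp [aOp, eD]

theorem aVec_neg_one_sub (t : ℕ) (S : Finset ℕ) :
    aVec (-1 - t) S =
      if t ∈ S then (-1 : ℂ) ^ (S.filter (t < ·)).card • eD (S.erase t) else 0 := by
  have neg : ¬ (0 : ℤ) ≤ -1 - t := by omega
  have toNat_eq : (-(-1 - (t : ℤ)) - 1).toNat = t := by omega
  rw [aVec, if_neg neg, toNat_eq]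

section FermionModes

variable {t : ℕ} {S : Finset ℕ}

theorem aOp_natCast_eD_of_notMem (ht : t ∉ S) :
    aOp t (eD S) = (-1 : ℂ) ^ (S.filter (t < ·)).card • eD (insert t S) := by
  simp [aOp_eD_s1, aVec, ht]

theorem aOp_neg_one_sub_eD_of_mem (ht : t ∈ S) :
    aOp (-1 - t) (eD S) = (-1 : ℂ) ^ (S.filter (t < ·)).card • eD (S.erase t) := by
  rw [aOp_eD_s1, aVec_neg_one_sub, if_pos ht]

theorem aOp_neg_one_sub_eD_of_notMem (ht : t ∉ S) : aOp (-1 - t) (eD S) = 0 := by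
  rw [aOp_eD_s1, aVec_neg_one_sub, if_neg ht]

end FermionModes

theorem aOp_natCast_aOp_neg_one_sub_eD (t : ℕ) (S : Finset ℕ) :
    aOp t (aOp (-1 - t) (eD S)) = if t ∈ S then eD S else 0 := by
  split_ifs with ht
  · have filter_erase : (S.erase t).filter (t < ·) = S.filter (t < ·) := by
      rw [Finset.filter_erase, Finset.erase_eq_of_notMem (by simp)]
    rw [aOp_neg_one_sub_eD_of_mem ht, map_smul, aOp_natCast_eD_of_notMem (Finset.notMem_erase t S),
      filter_erase, Finset.insert_erase ht, smul_smul, ← mul_pow, neg_one_mul, neg_neg, one_pow,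
      one_smul]
  · rw [aOp_neg_one_sub_eD_of_notMem ht, map_zero]

theorem NO_natCast_neg_one_sub_eD (t : ℕ) (S : Finset ℕ) :
    NO t (-1 - t) (eD S) = if t ∈ S then eD S else 0 := by
  rw [← aOp_natCast_aOp_neg_one_sub_eD, NO, if_pos t.cast_nonneg, LinearMap.comp_apply]

theorem NO_swap {i j : ℤ} (hi : 0 ≤ i) (hj : j < 0) : NO j i = -NO i j := by
  rw [NO, NO, if_pos hi, if_neg hj.not_ge]

theorem finsum_smul_NO_eD (c : ℤ → ℂ) (S : Finset ℕ) :
    ∑ᶠ i, c i • NO i (-1 - i) (eD S) = (∑ s ∈ S, (c s - c (-1 - s))) • eD S := by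
  have neg_term (t : ℕ) :
      NO (-1 - t) (-1 - (-1 - t)) (eD S) = -if t ∈ S then eD S else 0 := by
    rw [sub_sub_cancel, NO_swap t.cast_nonneg (by omega), LinearMap.neg_apply,
      NO_natCast_neg_one_sub_eD]
  rw [finsum_int_eq_sum_natCast_add_neg_one_sub (S := S), Finset.sum_smul]
  · refine Finset.sum_congr rfl fun s hs => ?_
    rw [NO_natCast_neg_one_sub_eD, neg_term, if_pos hs, smul_neg, ← sub_eq_add_neg, ← sub_smul]
  · intro t ht
    rw [NO_natCast_neg_one_sub_eD, if_neg ht, smul_zero]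
  · intro t ht
    rw [neg_term, if_neg ht, neg_zero, smul_zero]

theorem chg_eq_neg_sum_neg_one_pow (S : Finset ℕ) : chg S = -∑ s ∈ S, (-1) ^ s := by
  rw [chg, Finset.natCast_card_filter, Finset.natCast_card_filter, ← Finset.sum_sub_distrib,
    ← Finset.sum_neg_distrib]
  refine Finset.sum_congr rfl fun s _ => ?_
  rcases s.even_or_odd with hs | hs
  · simp [hs, hs.neg_one_pow]
  · simp [hs, hs.neg_one_pow]

theorem half_mul_sum_neg_one_zpow_sub_eq_chg (S : Finset ℕ) :
    1 / 2 * ∑ s ∈ S, ((-1 : ℂ) ^ ((s : ℤ) + 1) - (-1) ^ (-1 - (s : ℤ) + 1)) = chg S := by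
  have summand_eq (s : ℕ) :
      1 / 2 * ((-1 : ℂ) ^ ((s : ℤ) + 1) - (-1) ^ (-1 - (s : ℤ) + 1)) = -(-1) ^ s := by
    rw [show -1 - (s : ℤ) + 1 = -s by ring, neg_one_zpow_neg, zpow_add_one₀ (by simp), zpow_natCast]
    ring
  rw [Finset.mul_sum, Finset.sum_congr rfl fun s _ => summand_eq s, chg_eq_neg_sum_neg_one_pow]
  simp

/-- Each basis vector `e_S` is a simultaneous eigenvector of `h_0` and of `L^{1/2}_0`:
`h_0 e_S = (#{s ∈ S odd} − #{s ∈ S even}) e_S` and `L^{1/2}_0 e_S = (∑_{s∈S} (s + 1/2)) e_S`. -/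
theorem eigenvectors_h0_L0 (S : Finset ℕ) :
    hD 0 (eD S) = (chg S : ℂ) • eD S ∧
    LhalfD 0 (eD S) = (∑ s ∈ S, ((s : ℂ) + 1 / 2)) • eD S := by
  constructor
  · calc hD 0 (eD S) = (1 / 2 : ℂ) • ∑ᶠ i : ℤ, (-1 : ℂ) ^ (i + 1) • NO i (-1 - i) (eD S) := by
          simp only [hD, mul_zero, zero_sub]
      _ = (1 / 2 * ∑ s ∈ S, ((-1 : ℂ) ^ ((s : ℤ) + 1) - (-1) ^ (-1 - (s : ℤ) + 1))) • eD S := by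
          rw [finsum_smul_NO_eD, smul_smul]
      _ = (chg S : ℂ) • eD S := by
          rw [half_mul_sum_neg_one_zpow_sub_eq_chg]
  · calc LhalfD 0 (eD S) = (1 / 2 : ℂ) • ∑ᶠ i : ℤ, (i : ℂ) • NO i (-1 - i) (eD S) := by
          simp only [LhalfD, neg_zero, zero_sub, neg_sub_comm _ (1 : ℤ)]
      _ = (1 / 2 * ∑ s ∈ S, (((s : ℤ) : ℂ) - ((-1 - s : ℤ) : ℂ))) • eD S := by
          rw [finsum_smul_NO_eD, smul_smul]
      _ = (∑ s ∈ S, ((s : ℂ) + 1 / 2)) • eD S := by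
          rw [Finset.mul_sum]
          congr! 2 with s
          push_cast
          ring
end
end

section
/- Fix n ∈ ℤ. For every finite subset S of ℕ with c(S) = n, the number ∑_{s∈S}(2s+1) − (2n² + n) is a nonnegative multiple of 4; and for every k ∈ ℕ, the number of finite subsets S of ℕ with c(S) = n and ∑_{s∈S}(2s+1) = 2n² + n + 4k equals p(k), the number of partitions of k into a sum of non-increasing positive integers (with p(0) = 1). -/
/-!
Read the odd elements of `S` as particles and the even ones as holes. Relabelling the even numbers
downwards and the odd numbers upwards along a single axis turns `S` into the set of occupied places
of a Maya diagram, i.e. `S` differs from the occupied set `T` by the Dirac sea of even numbers.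
Cut off at depth `N`, this is a bijection `T ↦ S` with `c(S) = |T| - N`, and the signed weight
`±(2s + 1)` of each place is affine in its position, with slope `4`. Completing the square,
`w(S) = 2n² + n + 4 (∑ T - (0 + 1 + ⋯ + (|T| - 1)))`. Subtracting the staircase `0, 1, 2, …` from
the increasing enumeration of `T` leaves a weakly increasing sequence whose sum is this excess, i.e.
a partition of the excess into at most `|T| = n + N` parts; for large `N` the bound on the number of
parts is void.
-/

noncomputable section

/-- Weight `w(S) = ∑_{s∈S} (2s+1)` of a finite set `S ⊆ ℕ`. -/
def wgt (S : Finset ℕ) : ℕ := ∑ s ∈ S, (2 * s + 1)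

section Staircase

open Finset Multiset

lemma val_le_of_strictMono {m : ℕ} {e : Fin m → ℕ} (he : StrictMono e) (i : Fin m) :
    (i : ℕ) ≤ e i := by
  simpa using card_le_card_of_injOn e (s := Iio i) (t := Iio (e i))
    (fun a ha => by simpa using he (Finset.mem_Iio.1 ha)) he.injective.injOn

lemma monotone_sub_val_of_strictMono {m : ℕ} {e : Fin m → ℕ} (he : StrictMono e) :
    Monotone fun i => e i - (i : ℕ) := by
  intro a b hab
  have gap : (b : ℕ) - a ≤ e b - e a := by
    simpa using card_le_card_of_injOn e (s := Ioc a b) (t := Ioc (e a) (e b))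
      (fun i hi => by
        rw [coe_Ioc, Set.mem_Ioc] at hi ⊢
        exact ⟨he hi.1, he.monotone hi.2⟩) he.injective.injOn
  have ha : (a : ℕ) ≤ e a := val_le_of_strictMono he a
  have he_ab : e a ≤ e b := he.monotone hab
  dsimp only
  omega

/-- Adding the staircase `0, 1, 2, …` identifies weakly with strictly increasing sequences of
natural numbers. -/
def addStaircase (m : ℕ) : (Fin m →o ℕ) ≃ (Fin m ↪o ℕ) where
  toFun f := OrderEmbedding.ofStrictMono (fun i => f i + i)
    fun _ _ h => add_lt_add_of_le_of_lt (f.monotone h.le) h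
  invFun e := ⟨fun i => e i - i, monotone_sub_val_of_strictMono e.strictMono⟩
  left_inv f := by
    ext i
    exact Nat.add_sub_cancel (f i) i
  right_inv e := by
    ext i
    exact Nat.sub_add_cancel (val_le_of_strictMono e.strictMono i)

/-- A weakly increasing sequence amounts to its multiset of values. -/
def monotoneEquivSym (α : Type*) [LinearOrder α] (m : ℕ) : (Fin m →o α) ≃ Sym α m :=
  Equiv.ofBijective (fun f => ⟨univ.val.map f, by simp⟩) <| by
    constructor
    · intro f g h
      have hperm : (List.ofFn f).Perm (List.ofFn g) := by
        simpa only [Fin.univ_val_map, Multiset.coe_eq_coe] using congrArg Subtype.val h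
      exact DFunLike.coe_injective <| List.ofFn_injective <|
        hperm.eq_of_sortedLE f.monotone.sortedLE_ofFn g.monotone.sortedLE_ofFn
    · rintro ⟨s, rfl⟩
      have hlen : (s.sort (· ≤ ·)).length = s.card := s.length_sort _
      let f : Fin s.card →o α := ⟨fun i => (s.sort (· ≤ ·)).get (i.cast hlen.symm), fun a b hab =>
        (Multiset.pairwise_sort s (· ≤ ·)).sortedLE.monotone_get hab⟩
      have hf : List.ofFn f = s.sort (· ≤ ·) :=
        (List.ofFn_congr hlen _).symm.trans (List.ofFn_get _)
      exact ⟨f, Subtype.ext <| (Fin.univ_val_map f).trans <|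
        (congrArg _ hf).trans (Multiset.sort_eq s _)⟩

/-- An `m`-element set `{t₀ < t₁ < ⋯}` of natural numbers as the multiset of the `tᵢ - i`. -/
def powersetCardEquivSym (m : ℕ) : Set.powersetCard ℕ m ≃ Sym ℕ m :=
  Set.powersetCard.ofFinEmbEquiv.symm.trans <| (addStaircase m).symm.trans <| monotoneEquivSym ℕ m

lemma sum_eq_sum_range_add_sum_powersetCardEquivSym {m : ℕ} (T : Set.powersetCard ℕ m) :
    ∑ t ∈ T.val, t = ∑ i ∈ range m, i + (powersetCardEquivSym m T : Multiset ℕ).sum := by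
  obtain ⟨f, rfl⟩ := ((addStaircase m).trans Set.powersetCard.ofFinEmbEquiv).surjective T
  have hT : powersetCardEquivSym m (((addStaircase m).trans Set.powersetCard.ofFinEmbEquiv) f)
      = monotoneEquivSym ℕ m f := by simp [powersetCardEquivSym]
  have hsum : (monotoneEquivSym ℕ m f : Multiset ℕ).sum = ∑ i, f i := rfl
  rw [hT, hsum, ← Fin.sum_univ_eq_sum_range (fun i => i), add_comm, ← sum_add_distrib]
  exact Finset.sum_map _ _ _

lemma sum_range_card_le_sum (T : Finset ℕ) : ∑ i ∈ range T.card, i ≤ ∑ t ∈ T, t :=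
  le_of_le_of_eq (Nat.le_add_right _ _)
    (sum_eq_sum_range_add_sum_powersetCardEquivSym ⟨T, rfl⟩).symm

end Staircase

section Partition

open Multiset

lemma filter_ne_add_replicate_count {α : Type*} [DecidableEq α] (s : Multiset α) (a : α) :
    s.filter (· ≠ a) + replicate (s.count a) a = s := by
  rw [← filter_eq', add_comm, filter_add_not]

lemma partition_card_parts_le {k : ℕ} (p : Nat.Partition k) : p.parts.card ≤ k := by
  simpa only [smul_eq_mul, mul_one, p.parts_sum] using
    card_nsmul_le_sum (a := 1) fun _ hx => p.parts_pos hx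

/-- Discarding zeros turns the multisets of `m` natural numbers with sum `k` into the partitions
of `k` into at most `m` parts. -/
def symEquivPartition (m k : ℕ) :
    {s : Sym ℕ m // (s : Multiset ℕ).sum = k} ≃ {p : Nat.Partition k // p.parts.card ≤ m} where
  toFun s := ⟨Nat.Partition.ofSums k s.1 s.2,
    (card_le_card (filter_le _ _)).trans_eq s.1.2⟩
  invFun p := ⟨⟨p.1.parts + replicate (m - p.1.parts.card) 0, by simp [p.2]⟩,
    by simp [p.1.parts_sum]⟩
  left_inv := by
    rintro ⟨⟨s, rfl⟩, hs⟩
    have hcount : s.card - (s.filter (· ≠ 0)).card = s.count 0 := by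
      have := congrArg card (filter_ne_add_replicate_count s 0)
      rw [card_add, card_replicate] at this
      omega
    refine Subtype.ext <| Subtype.ext ?_
    change s.filter (· ≠ 0) + replicate (s.card - (s.filter (· ≠ 0)).card) 0 = s
    rw [hcount, filter_ne_add_replicate_count]
  right_inv p := by
    refine Subtype.ext <| Nat.Partition.ext ?_
    change (p.1.parts + replicate _ 0).filter (· ≠ 0) = p.1.parts
    rw [filter_add, filter_eq_self.2 fun _ h => (p.1.parts_pos h).ne',
      filter_eq_nil.2 fun _ h => not_not.2 (eq_of_mem_replicate h), add_zero]

/-- The staircase bijection, graded by the sum of the set. -/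
def finsetEquivPartition (m k : ℕ) :
    {T : Finset ℕ | T.card = m ∧ ∑ t ∈ T, t = ∑ i ∈ Finset.range m, i + k}
      ≃ {p : Nat.Partition k // p.parts.card ≤ m} :=
  (Equiv.subtypeSubtypeEquivSubtypeInter _ _).symm.trans <|
    ((powersetCardEquivSym m).subtypeEquiv fun T => by
      rw [sum_eq_sum_range_add_sum_powersetCardEquivSym, Nat.add_left_cancel_iff]).trans <|
    symEquivPartition m k

lemma ncard_finset_sum_eq_card_partition {m k : ℕ} (hkm : k ≤ m) :
    {T : Finset ℕ | T.card = m ∧ ∑ t ∈ T, t = ∑ i ∈ Finset.range m, i + k}.ncard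
      = Fintype.card (Nat.Partition k) := by
  rw [← Nat.card_coe_set_eq, ← Nat.card_eq_fintype_card]
  exact Nat.card_congr <| (finsetEquivPartition m k).trans <|
    Equiv.subtypeUnivEquiv fun p => (partition_card_parts_le p).trans hkm

end Partition

section Maya

open Finset

/-- The even numbers below `2 * N`: the ground state of the Maya diagrams cut off at depth `N`. -/
def diracSea (N : ℕ) : Finset ℕ := (range N).image (2 * ·)

/-- The number sitting at position `t` of a Maya diagram cut off at depth `N`: the positions below
`N` carry the even numbers `2 * (N - 1), …, 2, 0` and the others the odd numbers `1, 3, …`. -/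
def mayaLabel (N t : ℕ) : ℕ := if t < N then 2 * (N - 1 - t) else 2 * (t - N) + 1

/-- The set of particles (odd numbers) and holes (even numbers) of the Maya diagram with occupied
positions `T`. -/
def ofMaya (N : ℕ) (T : Finset ℕ) : Finset ℕ := symmDiff (T.image (mayaLabel N)) (diracSea N)

variable {N : ℕ}

lemma mem_diracSea {x : ℕ} : x ∈ diracSea N ↔ Even x ∧ x < 2 * N := by
  simp only [diracSea, mem_image, mem_range, even_iff_exists_two_mul]
  constructor
  · rintro ⟨b, hb, rfl⟩
    exact ⟨⟨b, rfl⟩, by omega⟩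
  · rintro ⟨⟨b, rfl⟩, h⟩
    exact ⟨b, by omega, rfl⟩

lemma mayaLabel_injective (N : ℕ) : Function.Injective (mayaLabel N) := by
  intro a b h
  unfold mayaLabel at h
  split_ifs at h <;> omega

lemma even_mayaLabel_iff {t : ℕ} : Even (mayaLabel N t) ↔ t < N := by
  unfold mayaLabel
  split_ifs with h <;> simp [h]

lemma mayaLabel_mem_diracSea_iff {t : ℕ} : mayaLabel N t ∈ diracSea N ↔ t < N := by
  rw [mem_diracSea, even_mayaLabel_iff, and_iff_left_iff_imp]
  intro h
  rw [mayaLabel, if_pos h]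
  omega

lemma exists_mayaLabel_eq {x : ℕ} (hx : Even x → x < 2 * N) : ∃ t, mayaLabel N t = x := by
  rcases Nat.even_or_odd' x with ⟨c, rfl | rfl⟩
  · have hc : 2 * c < 2 * N := hx (even_two_mul c)
    exact ⟨N - 1 - c, by rw [mayaLabel, if_pos (by omega)]; omega⟩
  · exact ⟨c + N, by rw [mayaLabel, if_neg (by omega)]; omega⟩

lemma ofMaya_injective (N : ℕ) : Function.Injective (ofMaya N) :=
  (symmDiff_left_injective _).comp (image_injective (mayaLabel_injective N))

lemma exists_ofMaya_eq {S : Finset ℕ} (hS : ∀ s ∈ S, Even s → s < 2 * N) :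
    ∃ T, ofMaya N T = S := by
  have hlabel : ↑(symmDiff S (diracSea N)) ⊆ mayaLabel N '' Set.univ := by
    intro x hx
    rw [Set.image_univ]
    refine exists_mayaLabel_eq fun hx_even => ?_
    rcases mem_symmDiff.1 hx with ⟨hxS, -⟩ | ⟨hx_sea, -⟩
    · exact hS x hxS hx_even
    · exact (mem_diracSea.1 hx_sea).2
  obtain ⟨T, -, hT⟩ := subset_set_image_iff.1 hlabel
  exact ⟨T, by rw [ofMaya, hT, symmDiff_symmDiff_cancel_right]⟩

lemma sum_symmDiff {α M : Type*} [DecidableEq α] [AddCommGroup M] (s t : Finset α) (f : α → M) :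
    ∑ x ∈ symmDiff s t, f x = ∑ x ∈ s, (if x ∈ t then -f x else f x) + ∑ x ∈ t, f x := by
  rw [symmDiff_def, sup_eq_union, sum_union disjoint_sdiff_sdiff, sum_ite, filter_mem_eq_inter,
    filter_notMem_eq_sdiff, sum_neg_distrib, ← sum_inter_add_sum_sdiff t s f, inter_comm t s]
  abel

lemma sum_ofMaya {M : Type*} [AddCommGroup M] (N : ℕ) (T : Finset ℕ) (f : ℕ → M) :
    ∑ x ∈ ofMaya N T, f x
      = ∑ t ∈ T, (if t < N then -f (mayaLabel N t) else f (mayaLabel N t))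
        + ∑ b ∈ range N, f (2 * b) := by
  rw [ofMaya, sum_symmDiff, sum_image (mayaLabel_injective N).injOn]
  simp only [mayaLabel_mem_diracSea_iff]
  rw [diracSea, sum_image (mul_right_injective₀ two_ne_zero).injOn]

lemma chg_eq_sum (S : Finset ℕ) : chg S = ∑ s ∈ S, if Even s then (-1 : ℤ) else 1 := by
  rw [sum_ite, sum_const, sum_const, chg]
  simp only [Nat.not_even_iff_odd, nsmul_eq_mul, mul_neg, mul_one]
  ring

lemma chg_ofMaya (N : ℕ) (T : Finset ℕ) : chg (ofMaya N T) = T.card - N := by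
  have hT : ∀ t ∈ T, (if t < N then -(if Even (mayaLabel N t) then (-1 : ℤ) else 1)
      else if Even (mayaLabel N t) then -1 else 1) = 1 := by
    intro t _
    simp only [even_mayaLabel_iff]
    split_ifs <;> rfl
  rw [chg_eq_sum, sum_ofMaya, sum_congr rfl hT]
  simp [sub_eq_add_neg]

lemma sum_range_two_mul_two_mul_add_one (N : ℕ) :
    ∑ b ∈ range N, (2 * ((2 * b : ℕ) : ℤ) + 1) = 2 * (N : ℤ) ^ 2 - N := by
  induction N with
  | zero => simp
  | succ N ih =>
    rw [sum_range_succ, ih]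
    push_cast
    ring

lemma wgt_ofMaya (N : ℕ) (T : Finset ℕ) :
    (wgt (ofMaya N T) : ℤ)
      = 4 * (∑ t ∈ T, t : ℕ) + (3 - 4 * N) * T.card + (2 * (N : ℤ) ^ 2 - N) := by
  have hT : ∀ t ∈ T, (if t < N then -(2 * (mayaLabel N t : ℤ) + 1) else 2 * mayaLabel N t + 1)
      = 4 * (t : ℤ) + (3 - 4 * N) := by
    intro t _
    unfold mayaLabel
    split_ifs <;> omega
  have hcast : (wgt (ofMaya N T) : ℤ) = ∑ s ∈ ofMaya N T, (2 * (s : ℤ) + 1) := by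
    rw [wgt]
    push_cast
    rfl
  rw [hcast, sum_ofMaya, sum_congr rfl hT, sum_range_two_mul_two_mul_add_one,
    sum_add_distrib, ← mul_sum, sum_const, nsmul_eq_mul]
  push_cast
  ring

lemma wgt_ofMaya_eq_excess {n : ℤ} {T : Finset ℕ} (hn : chg (ofMaya N T) = n) :
    (wgt (ofMaya N T) : ℤ)
      = 2 * n ^ 2 + n + 4 * ((∑ t ∈ T, t : ℕ) - (∑ i ∈ range T.card, i : ℕ)) := by
  have hstair : ((∑ i ∈ range T.card, i : ℕ) : ℤ) * 2 = T.card * (T.card - 1) := by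
    rcases T.card.eq_zero_or_pos with h | h
    · simp [h]
    · rw [← Nat.cast_pred h]
      exact_mod_cast sum_range_id_mul_two T.card
  rw [wgt_ofMaya, ← hn, chg_ofMaya]
  linear_combination 2 * hstair

lemma two_mul_add_one_le_wgt {S : Finset ℕ} {s : ℕ} (hs : s ∈ S) : 2 * s + 1 ≤ wgt S :=
  single_le_sum (f := fun s => 2 * s + 1) (fun _ _ => Nat.zero_le _) hs

lemma exists_ofMaya_eq_of_wgt_le {S : Finset ℕ} (hS : wgt S ≤ 4 * N) : ∃ T, ofMaya N T = S :=
  exists_ofMaya_eq fun s hs _ => by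
    have := two_mul_add_one_le_wgt hs
    omega

lemma bijOn_ofMaya {n : ℤ} {k m : ℕ} (hm : (m : ℤ) = n + N)
    (hN : 2 * n ^ 2 + n + 4 * k ≤ 4 * N) :
    Set.BijOn (ofMaya N) {T | T.card = m ∧ ∑ t ∈ T, t = ∑ i ∈ range m, i + k}
      {S | chg S = n ∧ (wgt S : ℤ) = 2 * n ^ 2 + n + 4 * k} := by
  refine ⟨?_, (ofMaya_injective N).injOn, ?_⟩
  · rintro T ⟨rfl, hsum⟩
    have hn : chg (ofMaya N T) = n := by rw [chg_ofMaya, hm, add_sub_cancel_right]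
    refine ⟨hn, ?_⟩
    rw [wgt_ofMaya_eq_excess hn, hsum, Nat.cast_add, add_sub_cancel_left]
  · rintro S ⟨hn, hw⟩
    obtain ⟨T, rfl⟩ := exists_ofMaya_eq_of_wgt_le (N := N) (S := S) (by omega)
    have hcard : T.card = m := by
      rw [chg_ofMaya] at hn
      omega
    have hexcess := wgt_ofMaya_eq_excess hn
    rw [hcard] at hexcess
    exact ⟨T, ⟨hcard, by omega⟩, rfl⟩

end Maya

/-- For every finite `S ⊆ ℕ` of charge `n`, the number `∑_{s∈S}(2s+1) − (2n² + n)` is a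
nonnegative multiple of `4`; and the number of finite subsets of charge `n` and weight
`2n² + n + 4k` equals `p(k)`, the number of partitions of `k`. -/
theorem charge_energy_grading_count (n : ℤ) :
    (∀ S : Finset ℕ, chg S = n →
      2 * n ^ 2 + n ≤ (wgt S : ℤ) ∧ (4 : ℤ) ∣ ((wgt S : ℤ) - (2 * n ^ 2 + n))) ∧
    (∀ k : ℕ,
      {S : Finset ℕ | chg S = n ∧ (wgt S : ℤ) = 2 * n ^ 2 + n + 4 * k}.ncard
        = Fintype.card (Nat.Partition k)) := by
  constructor
  · intro S hn
    obtain ⟨N, hN⟩ : ∃ N, wgt S ≤ 4 * N := ⟨wgt S, by omega⟩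
    obtain ⟨T, rfl⟩ := exists_ofMaya_eq_of_wgt_le hN
    have hexcess := wgt_ofMaya_eq_excess hn
    have hnonneg := sum_range_card_le_sum T
    exact ⟨by omega, _, sub_eq_of_eq_add' hexcess⟩
  · intro k
    obtain ⟨N, m, hm, hkm, hN⟩ : ∃ N m : ℕ,
        (m : ℤ) = n + N ∧ k ≤ m ∧ 2 * n ^ 2 + n + 4 * k ≤ 4 * N := by
      let N := (2 * n ^ 2 + n + 4 * k).toNat + k + n.natAbs
      exact ⟨N, (n + N).toNat, by omega, by omega, by omega⟩
    rw [← (bijOn_ofMaya hm hN).ncard_eq, ncard_finset_sum_eq_card_partition hkm]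
end
end

section
/- For every n ∈ ℤ, the charge-n component F_{(n)} is irreducible under the Heisenberg action: if W is a ℂ-subspace of F_{(n)} with h_m(W) ⊆ W for all m ∈ ℤ and W ≠ 0, then W = F_{(n)}. -/
noncomputable section

/-!
Pair the fermions into `ψ_k = a_{2k+1}` and their conjugates `φ_k = a_{-2k-2}`. Then
`h_n = ∑_k ψ_k φ_{k+n}` for `n ≠ 0`, and `e_S` becomes a Maya diagram: the set of `k` whose `ψ_k`
kills `e_S`. In `∑_{n > 0} h_{-n} h_n` the terms `ψ_a φ_b ψ_c φ_d` with `b ≠ c` cancel in pairs, and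
what remains is the diagonal operator `∑_{q < p} ψ_p φ_p φ_q ψ_q`, whose eigenvalue on `e_S` counts
the inversions of the diagram, the pairs `q < p` with `p` occupied and `q` vacant. A diagram without
inversions is a lower set, and lower sets are determined by their charge.

Since `h_n` lowers the energy for `n > 0`, a nonzero vector of `W` of minimal energy is killed by
all `h_n` with `n > 0`. It is thus supported on sets without inversions, so it is a multiple of the
ground vector. Any other `e_S` is a nonzero multiple of `∑_{n > 0} h_{-n} h_n e_S`, where the
`h_n e_S` have smaller energy, so induction on the energy puts all of `F_{(n)}` into `W`.
-/

section Fermionic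

/-- Two families `ψ`, `φ` of fermion modes in a ring: all modes square to zero and anticommute,
except that nothing is asked of the conjugate pairs `ψ a`, `φ a`. -/
structure IsFermionic {ι A : Type*} [Ring A] (ψ φ : ι → A) : Prop where
  psi_mul_self (a : ι) : ψ a * ψ a = 0
  phi_mul_self (a : ι) : φ a * φ a = 0
  psi_mul_psi (a b : ι) : ψ a * ψ b = -(ψ b * ψ a)
  phi_mul_phi (a b : ι) : φ a * φ b = -(φ b * φ a)
  phi_mul_psi {a b : ι} : a ≠ b → φ a * ψ b = -(ψ b * φ a)

/-- The `n`-th mode `∑ ψ a * φ (a + n)` of the current `ψφ`, cut off to a finite window `I` of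
indices. -/
def windowCurrent {ι A : Type*} [AddGroup ι] [DecidableEq ι] [Ring A] (ψ φ : ι → A)
    (I : Finset ι) (n : ι) : A :=
  ∑ x ∈ I ×ˢ I with x.2 - x.1 = n, ψ x.1 * φ x.2

/-- The index quadruples `((a, b), (c, d))` of the monomials `ψ a * φ b * (ψ c * φ d)` occurring
in the products `J (-n) * J n` of window currents with `n > 0`. -/
def currentQuads {ι : Type*} [AddGroup ι] [LinearOrder ι] (I : Finset ι) :
    Finset ((ι × ι) × (ι × ι)) :=
  {x ∈ (I ×ˢ I) ×ˢ (I ×ˢ I) | x.2.1 < x.2.2 ∧ x.1.1 - x.1.2 = x.2.2 - x.2.1}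

theorem mem_currentQuads {ι : Type*} [AddGroup ι] [LinearOrder ι] {I : Finset ι} {a b c d : ι} :
    ((a, b), (c, d)) ∈ currentQuads I ↔
      ((a ∈ I ∧ b ∈ I) ∧ c ∈ I ∧ d ∈ I) ∧ c < d ∧ a - b = d - c := by
  simp [currentQuads]

theorem windowCurrent_neg_mul_windowCurrent {ι A : Type*} [AddCommGroup ι] [LinearOrder ι]
    [IsOrderedAddMonoid ι] [Ring A] (ψ φ : ι → A) (I : Finset ι) {n : ι} (hn : 0 < n) :
    windowCurrent ψ φ I (-n) * windowCurrent ψ φ I n =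
      ∑ x ∈ currentQuads I with x.2.2 - x.2.1 = n,
        ψ x.1.1 * φ x.1.2 * (ψ x.2.1 * φ x.2.2) := by
  rw [windowCurrent, windowCurrent, Finset.sum_mul_sum, ← Finset.sum_product']
  refine Finset.sum_congr (Finset.ext fun ⟨⟨a, b⟩, c, d⟩ => ?_) fun _ _ => rfl
  simp only [Finset.mem_filter, Finset.mem_product, mem_currentQuads]
  grind

namespace IsFermionic

variable {ι A : Type*} [Ring A] {ψ φ : ι → A}

theorem bilinear_mul_bilinear (h : IsFermionic ψ φ) {a b c d : ι} (hbc : b ≠ c) :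
    ψ a * φ b * (ψ c * φ d) = -(ψ a * ψ c * (φ b * φ d)) :=
  calc ψ a * φ b * (ψ c * φ d) = ψ a * (φ b * ψ c) * φ d := by noncomm_ring
    _ = -(ψ a * ψ c * (φ b * φ d)) := by rw [h.phi_mul_psi hbc]; noncomm_ring

theorem bilinear_mul_bilinear_swap_psi (h : IsFermionic ψ φ) {a b c d : ι} (hba : b ≠ a)
    (hbc : b ≠ c) : ψ c * φ b * (ψ a * φ d) = -(ψ a * φ b * (ψ c * φ d)) := by
  rw [h.bilinear_mul_bilinear hba, h.bilinear_mul_bilinear hbc, h.psi_mul_psi c a, neg_mul]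

theorem bilinear_mul_bilinear_swap_phi (h : IsFermionic ψ φ) {a b c d : ι} (hbc : b ≠ c)
    (hdc : d ≠ c) : ψ a * φ d * (ψ c * φ b) = -(ψ a * φ b * (ψ c * φ d)) := by
  rw [h.bilinear_mul_bilinear hdc, h.bilinear_mul_bilinear hbc, h.phi_mul_phi d b, mul_neg]

theorem bilinear_mul_bilinear_conjugate (h : IsFermionic ψ φ) {p q : ι} (hqp : q ≠ p) :
    ψ p * φ q * (ψ q * φ p) = ψ p * φ p * (φ q * ψ q) :=
  calc ψ p * φ q * (ψ q * φ p) = -(ψ p * φ q * (φ p * ψ q)) := by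
        rw [h.phi_mul_psi hqp.symm]; noncomm_ring
    _ = -(ψ p * (φ q * φ p) * ψ q) := by noncomm_ring
    _ = ψ p * φ p * (φ q * ψ q) := by rw [h.phi_mul_phi q p]; noncomm_ring

variable [AddCommGroup ι] [LinearOrder ι] [IsOrderedAddMonoid ι]

-- Since `a - b = d - c`, the condition `b < c` amounts to `a < d`, so exchanging `a` and `c`
-- preserves these quadruples. It reverses the sign of the monomial, which vanishes if `a = c`.
theorem sum_currentQuads_lt (h : IsFermionic ψ φ) (I : Finset ι) :
    ∑ x ∈ currentQuads I with x.1.2 < x.2.1, ψ x.1.1 * φ x.1.2 * (ψ x.2.1 * φ x.2.2) = 0 := by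
  refine Finset.sum_involution (fun x _ => ((x.2.1, x.1.2), (x.1.1, x.2.2))) ?_ ?_ ?_ ?_
  · rintro ⟨⟨a, b⟩, c, d⟩ hx
    simp only [Finset.mem_filter, mem_currentQuads] at hx
    exact add_eq_zero_iff_eq_neg'.2 (h.bilinear_mul_bilinear_swap_psi (by grind) (by grind))
  · rintro ⟨⟨a, b⟩, c, d⟩ hx hne heq
    simp only [Finset.mem_filter] at hx
    obtain rfl : c = a := congrArg (·.1.1) heq
    simp [h.bilinear_mul_bilinear hx.2.ne, h.psi_mul_self] at hne
  · rintro ⟨⟨a, b⟩, c, d⟩ hx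
    simp only [Finset.mem_filter, mem_currentQuads] at hx ⊢
    grind
  · simp

theorem sum_currentQuads_gt (h : IsFermionic ψ φ) (I : Finset ι) :
    ∑ x ∈ currentQuads I with x.2.1 < x.1.2, ψ x.1.1 * φ x.1.2 * (ψ x.2.1 * φ x.2.2) = 0 := by
  refine Finset.sum_involution (fun x _ => ((x.1.1, x.2.2), (x.2.1, x.1.2))) ?_ ?_ ?_ ?_
  · rintro ⟨⟨a, b⟩, c, d⟩ hx
    simp only [Finset.mem_filter, mem_currentQuads] at hx
    exact add_eq_zero_iff_eq_neg'.2 (h.bilinear_mul_bilinear_swap_phi (by grind) (by grind))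
  · rintro ⟨⟨a, b⟩, c, d⟩ hx hne heq
    simp only [Finset.mem_filter] at hx
    obtain rfl : d = b := congrArg (·.1.2) heq
    simp [h.bilinear_mul_bilinear hx.2.ne', h.phi_mul_self] at hne
  · rintro ⟨⟨a, b⟩, c, d⟩ hx
    simp only [Finset.mem_filter, mem_currentQuads] at hx ⊢
    grind
  · simp

theorem sum_currentQuads_eq (h : IsFermionic ψ φ) (I : Finset ι) :
    ∑ x ∈ currentQuads I with x.1.2 = x.2.1, ψ x.1.1 * φ x.1.2 * (ψ x.2.1 * φ x.2.2) =
      ∑ x ∈ I ×ˢ I with x.2 < x.1, ψ x.1 * φ x.1 * (φ x.2 * ψ x.2) := by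
  refine Finset.sum_bij' (fun x _ => x.1) (fun x _ => (x, x.swap)) ?_ ?_ ?_ ?_ ?_
  · rintro ⟨⟨a, b⟩, c, d⟩ hx
    simp only [Finset.mem_filter, mem_currentQuads, Finset.mem_product] at hx ⊢
    grind
  · rintro ⟨p, q⟩ hx
    simp only [Finset.mem_filter, mem_currentQuads, Finset.mem_product, Prod.swap] at hx ⊢
    grind
  · rintro ⟨⟨a, b⟩, c, d⟩ hx
    simp only [Finset.mem_filter, mem_currentQuads, Prod.swap, Prod.mk.injEq] at hx ⊢
    grind
  · simp
  · rintro ⟨⟨a, b⟩, c, d⟩ hx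
    simp only [Finset.mem_filter, mem_currentQuads] at hx
    obtain ⟨⟨-, hcd, had⟩, rfl⟩ := hx
    obtain rfl : a = d := by grind
    exact h.bilinear_mul_bilinear_conjugate hcd.ne

theorem sum_currentQuads (h : IsFermionic ψ φ) (I : Finset ι) :
    ∑ x ∈ currentQuads I, ψ x.1.1 * φ x.1.2 * (ψ x.2.1 * φ x.2.2) =
      ∑ x ∈ I ×ˢ I with x.2 < x.1, ψ x.1 * φ x.1 * (φ x.2 * ψ x.2) := by
  rw [← h.sum_currentQuads_eq,
    ← Finset.sum_filter_add_sum_filter_not (currentQuads I) fun x => x.1.2 = x.2.1,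
    ← Finset.sum_filter_add_sum_filter_not {x ∈ currentQuads I | ¬x.1.2 = x.2.1}
      fun x => x.1.2 < x.2.1, Finset.filter_filter, Finset.filter_filter]
  have hlt (x : (ι × ι) × (ι × ι)) : (¬x.1.2 = x.2.1 ∧ x.1.2 < x.2.1) ↔ x.1.2 < x.2.1 := by grind
  have hgt (x : (ι × ι) × (ι × ι)) : (¬x.1.2 = x.2.1 ∧ ¬x.1.2 < x.2.1) ↔ x.2.1 < x.1.2 := by grind
  simp only [hlt, hgt, h.sum_currentQuads_lt, h.sum_currentQuads_gt, add_zero]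

theorem sum_windowCurrent_neg_mul_windowCurrent (h : IsFermionic ψ φ) {I K : Finset ι}
    (hK : ∀ n ∈ K, 0 < n) (hIK : ∀ p ∈ I, ∀ q ∈ I, q < p → p - q ∈ K) :
    ∑ n ∈ K, windowCurrent ψ φ I (-n) * windowCurrent ψ φ I n =
      ∑ x ∈ I ×ˢ I with x.2 < x.1, ψ x.1 * φ x.1 * (φ x.2 * ψ x.2) := by
  rw [← h.sum_currentQuads, Finset.sum_congr rfl fun n hn =>
    windowCurrent_neg_mul_windowCurrent ψ φ I (hK n hn)]
  refine Finset.sum_fiberwise_of_maps_to (fun ⟨⟨a, b⟩, c, d⟩ hx => ?_) _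
  rw [mem_currentQuads] at hx
  exact hIK d hx.1.2.2 c hx.1.2.1 hx.2.1

end IsFermionic

end Fermionic

section Finsum

theorem finsum_int_eq_two_nsmul_finsum_odd {M : Type*} [AddCommMonoid M] {f : ℤ → M} {c : ℤ}
    (hc : Odd c) (hsymm : ∀ i, f (c - i) = f i)
    (hfin : (Function.support fun k => f (2 * k + 1)).Finite) :
    ∑ᶠ i, f i = 2 • ∑ᶠ k, f (2 * k + 1) := by
  set odd : ℤ → ℤ := fun k => 2 * k + 1
  set even : ℤ → ℤ := fun k => c - (2 * k + 1)
  have hodd : Function.Injective odd := fun k l h => by grind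
  have heven : Function.Injective even := fun k l h => by grind
  have hunion : Set.range odd ∪ Set.range even = Set.univ := by
    refine Set.eq_univ_of_forall fun i => ?_
    obtain ⟨j, rfl⟩ := hc
    obtain ⟨k, rfl | rfl⟩ := i.even_or_odd'
    · exact Or.inr ⟨j - k, by grind⟩
    · exact Or.inl ⟨k, rfl⟩
  have hdisj : Disjoint (Set.range odd) (Set.range even) := by
    rw [Set.disjoint_iff_forall_ne]
    grind
  have hfeven : (fun k => f (even k)) = fun k => f (odd k) := funext fun k => hsymm _
  have hfin' {g : ℤ → ℤ} (hg : (Function.support fun k => f (g k)).Finite) :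
      (Set.range g ∩ Function.support f).Finite :=
    (hg.image g).subset (by rintro _ ⟨⟨k, rfl⟩, hk⟩; exact ⟨k, hk, rfl⟩)
  rw [← finsum_mem_univ, ← hunion, finsum_mem_union' hdisj (hfin' hfin)
    (hfin' (hfeven ▸ hfin)), finsum_mem_range hodd, finsum_mem_range heven, hfeven, two_nsmul]

end Finsum

open scoped symmDiff

section SymmDiffSingleton

variable {α : Type*} [DecidableEq α] {s : Finset α} {a : α}

theorem symmDiff_singleton_of_notMem (h : a ∉ s) : s ∆ {a} = insert a s := by
  ext; grind [Finset.mem_symmDiff]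

theorem symmDiff_singleton_of_mem (h : a ∈ s) : s ∆ {a} = s.erase a := by
  ext; grind [Finset.mem_symmDiff]

theorem mem_symmDiff_singleton_self : a ∈ s ∆ {a} ↔ a ∉ s := by
  simp [Finset.mem_symmDiff]

theorem mem_symmDiff_singleton_of_ne {b : α} (h : b ≠ a) : b ∈ s ∆ {a} ↔ b ∈ s := by
  simp [Finset.mem_symmDiff, h]

theorem sum_symmDiff_singleton {M : Type*} [AddCommGroup M] (s : Finset α) (a : α) (f : α → M) :
    ∑ i ∈ s ∆ {a}, f i = ∑ i ∈ s, f i + if a ∈ s then -f a else f a := by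
  split_ifs with h
  · rw [symmDiff_singleton_of_mem h, Finset.sum_erase_eq_sub h, sub_eq_add_neg]
  · rw [symmDiff_singleton_of_notMem h, Finset.sum_insert h, add_comm]

end SymmDiffSingleton

namespace FockD

section Modes

/-- The element `t` of `ℕ` created or annihilated by the fermion mode `a_m`: `t = m` if `0 ≤ m`
and `t = -m - 1` otherwise. -/
def level (m : ℤ) : ℕ := if 0 ≤ m then m.toNat else (-m - 1).toNat

/-- The sign with which `t` is created in or annihilated from `e_S`. -/
def modeSign (t : ℕ) (S : Finset ℕ) : ℂ := (-1) ^ (S.filter fun s => t < s).card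

/-- `a_m e_S = 0` for exclusion reasons: `S` already contains the element created by `a_m`, or
lacks the one annihilated by `a_m`. -/
def IsBlocked (m : ℤ) (S : Finset ℕ) : Prop := 0 ≤ m ↔ level m ∈ S

instance (m : ℤ) (S : Finset ℕ) : Decidable (IsBlocked m S) :=
  inferInstanceAs (Decidable (_ ↔ _))

theorem level_neg_one_sub (m : ℤ) : level (-1 - m) = level m := by
  grind [level]

theorem level_eq_level_iff {m n : ℤ} : level m = level n ↔ m = n ∨ m + n = -1 := by
  grind [level]

theorem isBlocked_neg_one_sub {m : ℤ} {S : Finset ℕ} : IsBlocked (-1 - m) S ↔ ¬IsBlocked m S := by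
  grind [IsBlocked, level_neg_one_sub]

theorem isBlocked_symmDiff_self {m : ℤ} {S : Finset ℕ} :
    IsBlocked m (S ∆ {level m}) ↔ ¬IsBlocked m S := by
  grind [IsBlocked, mem_symmDiff_singleton_self]

theorem isBlocked_symmDiff_of_ne {m : ℤ} {t : ℕ} {S : Finset ℕ} (h : level m ≠ t) :
    IsBlocked m (S ∆ {t}) ↔ IsBlocked m S := by
  rw [IsBlocked, IsBlocked, mem_symmDiff_singleton_of_ne h]

theorem modeSign_mul_self (t : ℕ) (S : Finset ℕ) : modeSign t S * modeSign t S = 1 := by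
  rw [modeSign, ← mul_pow, neg_one_mul, neg_neg, one_pow]

theorem modeSign_insert (t : ℕ) {u : ℕ} {S : Finset ℕ} (hu : u ∉ S) :
    modeSign t (insert u S) = if t < u then -modeSign t S else modeSign t S := by
  unfold modeSign
  rw [Finset.filter_insert]
  split_ifs
  · rw [Finset.card_insert_of_notMem (by simp [hu]), pow_succ, mul_neg_one]
  · rfl

theorem modeSign_symmDiff (t u : ℕ) (S : Finset ℕ) :
    modeSign t (S ∆ {u}) = if t < u then -modeSign t S else modeSign t S := by
  by_cases hu : u ∈ S
  · have h := modeSign_insert t (Finset.notMem_erase u S)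
    rw [Finset.insert_erase hu] at h
    rw [symmDiff_singleton_of_mem hu]
    grind
  · rw [symmDiff_singleton_of_notMem hu, modeSign_insert t hu]

theorem modeSign_mul_modeSign_symmDiff {t u : ℕ} (h : t ≠ u) (S : Finset ℕ) :
    modeSign u S * modeSign t (S ∆ {u}) = -(modeSign t S * modeSign u (S ∆ {t})) := by
  rw [modeSign_symmDiff, modeSign_symmDiff]
  grind

theorem aOp_eD (m : ℤ) (S : Finset ℕ) :
    aOp m (eD S) = if IsBlocked m S then 0 else modeSign (level m) S • eD (S ∆ {level m}) := by
  have h : aOp m (eD S) = aVec m S := by simp [aOp, eD]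
  rw [h, aVec, modeSign]
  by_cases hm : 0 ≤ m
  · have hl : m.toNat = level m := (if_pos hm).symm
    grind [IsBlocked, symmDiff_singleton_of_notMem]
  · have hl : (-m - 1).toNat = level m := (if_neg hm).symm
    grind [IsBlocked, symmDiff_singleton_of_mem]

theorem aOp_eD_of_isBlocked {m : ℤ} {S : Finset ℕ} (h : IsBlocked m S) : aOp m (eD S) = 0 := by
  rw [aOp_eD, if_pos h]

theorem aOp_eD_of_not_isBlocked {m : ℤ} {S : Finset ℕ} (h : ¬IsBlocked m S) :
    aOp m (eD S) = modeSign (level m) S • eD (S ∆ {level m}) := by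
  rw [aOp_eD, if_neg h]

theorem aOp_aOp_conjugate_eD (m : ℤ) (S : Finset ℕ) :
    aOp m (aOp (-1 - m) (eD S)) = if IsBlocked m S then eD S else 0 := by
  split_ifs with h
  · rw [aOp_eD_of_not_isBlocked (isBlocked_neg_one_sub.not_left.2 h), map_smul, level_neg_one_sub,
      aOp_eD_of_not_isBlocked (isBlocked_symmDiff_self.not_left.2 h), smul_smul, modeSign_symmDiff,
      if_neg (lt_irrefl _), modeSign_mul_self, one_smul, symmDiff_symmDiff_cancel_right]
  · rw [aOp_eD_of_isBlocked (isBlocked_neg_one_sub.2 h), map_zero]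

theorem linearMap_ext {M : Type*} [AddCommMonoid M] [Module ℂ M] {f g : FockD →ₗ[ℂ] M}
    (h : ∀ S, f (eD S) = g (eD S)) : f = g :=
  Finsupp.lhom_ext' fun S => LinearMap.ext_ring (h S)

theorem aOp_mul_self (m : ℤ) : aOp m * aOp m = 0 := by
  refine linearMap_ext fun S => ?_
  rw [Module.End.mul_apply, LinearMap.zero_apply]
  by_cases h : IsBlocked m S
  · rw [aOp_eD_of_isBlocked h, map_zero]
  · rw [aOp_eD_of_not_isBlocked h, map_smul,
      aOp_eD_of_isBlocked (isBlocked_symmDiff_self.2 h), smul_zero]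

theorem aOp_mul_aOp {m n : ℤ} (h : m + n ≠ -1) : aOp m * aOp n = -(aOp n * aOp m) := by
  obtain rfl | hmn := eq_or_ne m n
  · rw [aOp_mul_self]
    exact (neg_zero (G := Module.End ℂ FockD)).symm
  have hlevel : level m ≠ level n := by grind [level_eq_level_iff]
  refine linearMap_ext fun S => ?_
  rw [LinearMap.neg_apply, Module.End.mul_apply, Module.End.mul_apply]
  by_cases hm : IsBlocked m S <;> by_cases hn : IsBlocked n S <;>
    simp only [aOp_eD, hm, hn, if_true, if_false, map_zero, map_smul, smul_zero, neg_zero,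
      isBlocked_symmDiff_of_ne hlevel, isBlocked_symmDiff_of_ne hlevel.symm]
  rw [smul_smul, smul_smul, modeSign_mul_modeSign_symmDiff hlevel, neg_smul,
    symmDiff_right_comm]

end Modes
section Maya

/-- The modes `ψ_k = a_{2k+1}`, which raise the charge by one. -/
def psi (k : ℤ) : Module.End ℂ FockD := aOp (2 * k + 1)

/-- The modes `φ_k = a_{-2k-2}` conjugate to `ψ_k`, which lower the charge by one. -/
def phi (k : ℤ) : Module.End ℂ FockD := aOp (-1 - (2 * k + 1))

/-- The Maya diagram of `S`: the set of `k ∈ ℤ` occupied in `e_S`, that is, `2 k + 1 ∈ S` if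
`0 ≤ k` and `-2 k - 2 ∉ S` if `k < 0`. -/
def maya (S : Finset ℕ) : Set ℤ := {k | IsBlocked (2 * k + 1) S}

instance (S : Finset ℕ) (k : ℤ) : Decidable (k ∈ maya S) :=
  inferInstanceAs (Decidable (IsBlocked (2 * k + 1) S))

theorem isFermionic_psi_phi : IsFermionic psi phi where
  psi_mul_self _ := aOp_mul_self _
  phi_mul_self _ := aOp_mul_self _
  psi_mul_psi _ _ := aOp_mul_aOp (by omega)
  phi_mul_phi _ _ := aOp_mul_aOp (by omega)
  phi_mul_psi _ := aOp_mul_aOp (by omega)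

theorem psi_eD_of_mem {k : ℤ} {S : Finset ℕ} (h : k ∈ maya S) : psi k (eD S) = 0 :=
  aOp_eD_of_isBlocked h

theorem phi_eD_of_notMem {k : ℤ} {S : Finset ℕ} (h : k ∉ maya S) : phi k (eD S) = 0 :=
  aOp_eD_of_isBlocked (isBlocked_neg_one_sub.2 h)

theorem psi_phi_eD (k : ℤ) (S : Finset ℕ) :
    psi k (phi k (eD S)) = if k ∈ maya S then eD S else 0 :=
  aOp_aOp_conjugate_eD _ S

theorem phi_psi_eD (k : ℤ) (S : Finset ℕ) :
    phi k (psi k (eD S)) = if k ∈ maya S then 0 else eD S := by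
  have h := aOp_aOp_conjugate_eD (-1 - (2 * k + 1)) S
  simp only [sub_sub_cancel, isBlocked_neg_one_sub, ite_not] at h
  exact h

theorem natCast_mem_maya {j : ℕ} {S : Finset ℕ} : (j : ℤ) ∈ maya S ↔ 2 * j + 1 ∈ S := by
  have h : level (2 * (j : ℤ) + 1) = 2 * j + 1 := by grind [level]
  simp only [maya, Set.mem_ofPred_eq, IsBlocked, h]
  grind

theorem neg_natCast_sub_one_mem_maya {j : ℕ} {S : Finset ℕ} :
    -(j : ℤ) - 1 ∈ maya S ↔ 2 * j ∉ S := by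
  have h : level (2 * (-(j : ℤ) - 1) + 1) = 2 * j := by grind [level]
  simp only [maya, Set.mem_ofPred_eq, IsBlocked, h]
  grind

theorem eq_of_maya_subset {S T : Finset ℕ} (hchg : chg S = chg T) (h : maya S ⊆ maya T) :
    S = T := by
  have hodd : S.filter (Odd ·) ⊆ T.filter (Odd ·) := fun s hs => by
    obtain ⟨hs, j, rfl⟩ := Finset.mem_filter.1 hs
    exact Finset.mem_filter.2 ⟨natCast_mem_maya.1 (h (natCast_mem_maya.2 hs)), j, rfl⟩
  have heven : T.filter (Even ·) ⊆ S.filter (Even ·) := fun s hs => by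
    obtain ⟨hs, j, rfl⟩ := Finset.mem_filter.1 hs
    rw [← two_mul] at hs ⊢
    refine Finset.mem_filter.2 ⟨?_, even_two_mul j⟩
    by_contra hj
    exact neg_natCast_sub_one_mem_maya.1 (h (neg_natCast_sub_one_mem_maya.2 hj)) hs
  have hcard_odd := Finset.card_le_card hodd
  have hcard_even := Finset.card_le_card heven
  unfold chg at hchg
  have hodd_eq := Finset.eq_of_subset_of_card_le hodd (by omega)
  have heven_eq := Finset.eq_of_subset_of_card_le heven (by omega)
  ext s
  obtain hs | hs := s.even_or_odd
  · simpa [hs] using (Finset.ext_iff.1 heven_eq s).symm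
  · simpa [hs] using Finset.ext_iff.1 hodd_eq s

end Maya

section Energy

/-- Twice the eigenvalue `∑ (s + 1 / 2)` of `L^{1/2}_0` on `e_S`. -/
def energy (S : Finset ℕ) : ℕ := ∑ s ∈ S, (2 * s + 1)

/-- The span of the `e_S` of energy at most `d` and charge `c`. -/
def boundedEnergy (d c : ℤ) : Submodule ℂ FockD :=
  Finsupp.supported ℂ ℂ {S | (energy S : ℤ) ≤ d ∧ chg S = c}

theorem energy_symmDiff_level {m : ℤ} {S : Finset ℕ} (h : ¬IsBlocked m S) :
    (energy (S ∆ {level m}) : ℤ) = energy S + (2 * m + 1) := by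
  simp only [energy, Nat.cast_sum, sum_symmDiff_singleton]
  grind [IsBlocked, level]

theorem chg_eq_sum (S : Finset ℕ) : chg S = ∑ s ∈ S, if Odd s then 1 else -1 := by
  rw [chg, Finset.sum_ite]
  simp [sub_eq_add_neg]

theorem chg_symmDiff_level {m : ℤ} {S : Finset ℕ} (h : ¬IsBlocked m S) :
    chg (S ∆ {level m}) = chg S + if Odd m then 1 else -1 := by
  have hodd : Odd (level m) ↔ (0 ≤ m ↔ Odd m) := by
    simp only [Nat.odd_iff, Int.odd_iff]
    grind [level]
  simp only [chg_eq_sum, sum_symmDiff_singleton]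
  grind [IsBlocked]

theorem eD_mem_boundedEnergy {d c : ℤ} {S : Finset ℕ} (hd : energy S ≤ d) (hc : chg S = c) :
    eD S ∈ boundedEnergy d c :=
  Finsupp.single_mem_supported ℂ 1 ⟨hd, hc⟩

theorem supported_eq_span_eD (A : Set (Finset ℕ)) :
    Finsupp.supported ℂ ℂ A = Submodule.span ℂ (eD '' A) :=
  Finsupp.supported_eq_span_single ℂ A

theorem boundedEnergy_le_iff {d c : ℤ} {U : Submodule ℂ FockD} :
    boundedEnergy d c ≤ U ↔ ∀ S, (energy S : ℤ) ≤ d → chg S = c → eD S ∈ U := by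
  rw [boundedEnergy, supported_eq_span_eD, Submodule.span_le, Set.image_subset_iff]
  exact ⟨fun h S hd hc => h ⟨hd, hc⟩, fun h S hS => h S hS.1 hS.2⟩

theorem fockComp_eq_supported (n : ℤ) : FockComp n = Finsupp.supported ℂ ℂ {S | chg S = n} := by
  rw [supported_eq_span_eD, FockComp]
  congr 1
  grind

theorem exists_mem_boundedEnergy {n : ℤ} {x : FockD} (hx : x ∈ FockComp n) :
    ∃ d : ℕ, x ∈ boundedEnergy d n := by
  obtain ⟨d, hd⟩ := (x.support.image energy).exists_le
  rw [fockComp_eq_supported] at hx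
  refine ⟨d, fun S hS => ⟨?_, hx hS⟩⟩
  exact_mod_cast hd _ (Finset.mem_image_of_mem energy hS)

theorem eq_zero_of_mem_boundedEnergy {d c : ℤ} (hd : d < 0) {x : FockD}
    (hx : x ∈ boundedEnergy d c) : x = 0 := by
  have h : boundedEnergy d c ≤ ⊥ := boundedEnergy_le_iff.2 fun S hS => by omega
  exact h hx

theorem map_eq_zero_of_mem_boundedEnergy {M : Type*} [AddCommMonoid M] [Module ℂ M]
    {f : FockD →ₗ[ℂ] M} {d c : ℤ} (hf : ∀ S, (energy S : ℤ) ≤ d → f (eD S) = 0) {x : FockD}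
    (hx : x ∈ boundedEnergy d c) : f x = 0 :=
  (boundedEnergy_le_iff (U := LinearMap.ker f)).2 (fun S hS _ => hf S hS) hx

theorem aOp_mem_boundedEnergy (m : ℤ) {d c : ℤ} {x : FockD} (hx : x ∈ boundedEnergy d c) :
    aOp m x ∈ boundedEnergy (d + (2 * m + 1)) (c + if Odd m then 1 else -1) := by
  refine (boundedEnergy_le_iff (U := (boundedEnergy (d + (2 * m + 1))
    (c + if Odd m then 1 else -1)).comap (aOp m))).2 (fun S hd hc => ?_) hx
  rw [Submodule.mem_comap]
  by_cases h : IsBlocked m S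
  · rw [aOp_eD_of_isBlocked h]
    exact zero_mem _
  · rw [aOp_eD_of_not_isBlocked h]
    refine Submodule.smul_mem _ _ (eD_mem_boundedEnergy ?_ ?_)
    · rw [energy_symmDiff_level h]
      lia
    · rw [chg_symmDiff_level h, hc]

theorem psi_phi_mem_boundedEnergy (k l : ℤ) {d c : ℤ} {x : FockD} (hx : x ∈ boundedEnergy d c) :
    psi k (phi l x) ∈ boundedEnergy (d - 4 * (l - k)) c := by
  have h : psi k (phi l x) ∈ boundedEnergy _ _ :=
    aOp_mem_boundedEnergy (2 * k + 1) (aOp_mem_boundedEnergy (-1 - (2 * l + 1)) hx)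
  rw [if_neg (by grind), if_pos (by grind)] at h
  convert h using 2 <;> ring

theorem two_mul_add_one_le_energy {s : ℕ} {S : Finset ℕ} (h : s ∈ S) : 2 * s + 1 ≤ energy S :=
  Finset.single_le_sum (f := fun s => 2 * s + 1) (fun _ _ => Nat.zero_le _) h

theorem lt_energy_of_mem_maya {k : ℤ} {S : Finset ℕ} (hk : 0 ≤ k) (h : k ∈ maya S) :
    k < energy S := by
  lift k to ℕ using hk
  have := two_mul_add_one_le_energy (natCast_mem_maya.1 h)
  omega

theorem neg_energy_le_of_notMem_maya {k : ℤ} {S : Finset ℕ} (hk : k < 0) (h : k ∉ maya S) :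
    -(energy S : ℤ) ≤ k := by
  obtain ⟨j, rfl⟩ : ∃ j : ℕ, k = -j - 1 := ⟨(-k - 1).toNat, by omega⟩
  have := two_mul_add_one_le_energy (not_not.1 (mt neg_natCast_sub_one_mem_maya.2 h))
  omega

/-- The indices on which the Maya diagrams of sets of energy at most `N` may differ from that of
the vacuum. -/
def window (N : ℤ) : Finset ℤ := Finset.Ico (-N) N

theorem mem_window {N k : ℤ} : k ∈ window N ↔ -N ≤ k ∧ k < N := Finset.mem_Ico

theorem psi_phi_eq_zero {k l d c : ℤ} (hkl : k ≠ l) {x : FockD} (hx : x ∈ boundedEnergy d c)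
    (h : k < -d ∨ d ≤ l) : psi k (phi l x) = 0 := by
  refine map_eq_zero_of_mem_boundedEnergy (f := psi k * phi l) (fun S hS => ?_) hx
  rw [Module.End.mul_apply]
  obtain hk | hl := h
  · have hmem : k ∈ maya S := by
      by_contra hk'
      have := neg_energy_le_of_notMem_maya (by omega) hk'
      omega
    have hswap := LinearMap.congr_fun (isFermionic_psi_phi.phi_mul_psi hkl.symm) (eD S)
    simpa [psi_eD_of_mem hmem] using hswap
  · rw [phi_eD_of_notMem fun hl' => ?_, map_zero]
    have := lt_energy_of_mem_maya (by omega) hl'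
    omega

end Energy

section Heisenberg

theorem NO_eq_mul {i j : ℤ} (h : i + j ≠ -1) : NO i j = aOp i * aOp j := by
  unfold NO
  split_ifs
  · rfl
  · exact (aOp_mul_aOp h).symm

theorem hD_eq_finsum {n : ℤ} (hn : n ≠ 0) {x : FockD}
    (hfin : (Function.support fun k => psi k (phi (k + n) x)).Finite) :
    hD n x = ∑ᶠ k, psi k (phi (k + n) x) := by
  have hodd (k : ℤ) : (-1 : ℂ) ^ (2 * k + 1 + 1) • NO (2 * k + 1) (-2 * n - 1 - (2 * k + 1)) x =
      psi k (phi (k + n) x) := by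
    rw [NO_eq_mul (by omega), Even.neg_one_zpow (by grind), one_smul, psi, phi,
      Module.End.mul_apply]
    congr 3
    ring
  have hsymm (i : ℤ) :
      (-1 : ℂ) ^ (-2 * n - 1 - i + 1) • NO (-2 * n - 1 - i) (-2 * n - 1 - (-2 * n - 1 - i)) x =
        (-1 : ℂ) ^ (i + 1) • NO i (-2 * n - 1 - i) x := by
    have hsign : (-1 : ℂ) ^ (-2 * n - 1 - i + 1) = -(-1) ^ (i + 1) := by
      obtain hi | hi := i.even_or_odd
      · rw [Even.neg_one_zpow (by grind), Odd.neg_one_zpow (by grind), neg_neg]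
      · rw [Odd.neg_one_zpow (by grind), Even.neg_one_zpow (by grind)]
    rw [sub_sub_cancel, hsign, NO_eq_mul (by omega), NO_eq_mul (by omega),
      aOp_mul_aOp (by omega), LinearMap.neg_apply, smul_neg, neg_smul, neg_neg]
  rw [hD, finsum_int_eq_two_nsmul_finsum_odd (c := -2 * n - 1) (by grind) hsymm
    (by simpa only [hodd] using hfin)]
  simp only [hodd]
  module

theorem hD_eq_windowCurrent {n d N c : ℤ} (hn : n ≠ 0) (hdN : d ≤ N) (hdnN : d - n ≤ N)
    {x : FockD} (hx : x ∈ boundedEnergy d c) : hD n x = windowCurrent psi phi (window N) n x := by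
  set P : Finset (ℤ × ℤ) := {p ∈ window N ×ˢ window N | p.2 - p.1 = n}
  have hinj : Set.InjOn Prod.fst (P : Set (ℤ × ℤ)) := fun p hp q hq hpq => by
    have hp' := (Finset.mem_filter.1 hp).2
    have hq' := (Finset.mem_filter.1 hq).2
    exact Prod.ext hpq (by omega)
  have hsupp : (Function.support fun k => psi k (phi (k + n) x)) ⊆ P.image Prod.fst := by
    intro k hk
    have hk' := mt (psi_phi_eq_zero (by omega) hx) hk
    simp only [P, Finset.coe_image, Set.mem_image, SetLike.mem_coe, Finset.mem_filter,
      Finset.mem_product, mem_window]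
    exact ⟨(k, k + n), by grind, rfl⟩
  rw [hD_eq_finsum hn ((P.image Prod.fst).finite_toSet.subset hsupp),
    finsum_eq_sum_of_support_subset _ hsupp, Finset.sum_image hinj, windowCurrent,
    LinearMap.sum_apply]
  refine Finset.sum_congr rfl fun p hp => ?_
  rw [Module.End.mul_apply, ← (Finset.mem_filter.1 hp).2, add_sub_cancel]

theorem hD_mem_boundedEnergy {n d c : ℤ} (hn : n ≠ 0) {x : FockD} (hx : x ∈ boundedEnergy d c) :
    hD n x ∈ boundedEnergy (d - 4 * n) c := by
  rw [hD_eq_windowCurrent hn (le_max_left d (d - n)) (le_max_right _ _) hx, windowCurrent,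
    LinearMap.sum_apply]
  refine Submodule.sum_mem _ fun p hp => ?_
  rw [← (Finset.mem_filter.1 hp).2]
  exact psi_phi_mem_boundedEnergy _ _ hx

theorem hD_zero (n : ℤ) : hD n 0 = 0 := by
  simp [hD]

/-- The operator `∑_{n > 0} h_{-n} h_n`, that is, `L^1_0 - h_0 ^ 2 / 2`, cut off to the modes that
act nontrivially on vectors of energy at most `N`. -/
def sugawara (N : ℤ) : Module.End ℂ FockD :=
  ∑ n ∈ Finset.Ioo 0 (2 * N),
    windowCurrent psi phi (window N) (-n) * windowCurrent psi phi (window N) n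

theorem sum_hD_neg_hD {d c : ℤ} {x : FockD} (hx : x ∈ boundedEnergy d c) :
    ∑ n ∈ Finset.Ioo 0 (2 * d), hD (-n) (hD n x) = sugawara d x := by
  rw [sugawara, LinearMap.sum_apply]
  refine Finset.sum_congr rfl fun n hn => ?_
  have hn0 := (Finset.mem_Ioo.1 hn).1
  rw [Module.End.mul_apply, ← hD_eq_windowCurrent hn0.ne' le_rfl (by omega) hx]
  exact hD_eq_windowCurrent (by omega) (by omega) (by omega) (hD_mem_boundedEnergy hn0.ne' hx)

end Heisenberg

section Inversions

/-- The pairs `p > q` with `p` occupied and `q` vacant in the Maya diagram of `S`. -/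
def inversions (S : Finset ℕ) : Finset (ℤ × ℤ) :=
  {x ∈ window (energy S) ×ˢ window (energy S) | x.2 < x.1 ∧ x.1 ∈ maya S ∧ x.2 ∉ maya S}

theorem mem_inversions {p q : ℤ} {S : Finset ℕ} :
    (p, q) ∈ inversions S ↔ q < p ∧ p ∈ maya S ∧ q ∉ maya S := by
  simp only [inversions, Finset.mem_filter, Finset.mem_product, mem_window, and_iff_right_iff_imp]
  rintro ⟨hqp, hp, hq⟩
  have := fun h => lt_energy_of_mem_maya h hp
  have := fun h => neg_energy_le_of_notMem_maya h hq
  omega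

theorem filter_window_eq_inversions {N : ℤ} {S : Finset ℕ} (hN : energy S ≤ N) :
    {x ∈ window N ×ˢ window N | x.2 < x.1 ∧ x.1 ∈ maya S ∧ x.2 ∉ maya S} = inversions S := by
  ext ⟨p, q⟩
  refine ⟨fun h => mem_inversions.2 (Finset.mem_filter.1 h).2, fun h => ?_⟩
  refine Finset.mem_filter.2 ⟨?_, mem_inversions.1 h⟩
  have := Finset.mem_product.1 (Finset.mem_filter.1 h).1
  simp only [Finset.mem_product, mem_window] at this ⊢
  omega

theorem sugawara_eD {N : ℤ} {S : Finset ℕ} (hN : energy S ≤ N) :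
    sugawara N (eD S) = (inversions S).card • eD S := by
  have hdiff (p : ℤ) (hp : p ∈ window N) (q : ℤ) (hq : q ∈ window N) (hqp : q < p) :
      p - q ∈ Finset.Ioo 0 (2 * N) := by
    grind [mem_window]
  have hterm (p q : ℤ) : (psi p * phi p * (phi q * psi q)) (eD S) =
      if p ∈ maya S ∧ q ∉ maya S then eD S else 0 := by
    simp only [Module.End.mul_apply, phi_psi_eD]
    by_cases hq : q ∈ maya S <;> simp [hq, psi_phi_eD]
  rw [sugawara, isFermionic_psi_phi.sum_windowCurrent_neg_mul_windowCurrent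
    (fun n hn => (Finset.mem_Ioo.1 hn).1) hdiff, LinearMap.sum_apply]
  simp only [hterm]
  rw [← Finset.sum_filter, Finset.filter_filter, Finset.sum_const, filter_window_eq_inversions hN]

theorem sugawara_apply {N c : ℤ} {x : FockD} (hx : x ∈ boundedEnergy N c) (S : Finset ℕ) :
    sugawara N x S = (inversions S).card * x S := by
  have h := map_eq_zero_of_mem_boundedEnergy (f := Finsupp.lapply S ∘ₗ sugawara N -
    ((inversions S).card : ℂ) • Finsupp.lapply S) (fun T hT => ?_) hx
  · simpa [sub_eq_zero] using h
  · obtain rfl | hTS := eq_or_ne T S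
    · simp only [LinearMap.sub_apply, LinearMap.comp_apply, LinearMap.smul_apply, sugawara_eD hT]
      simp [eD]
    · simp only [LinearMap.sub_apply, LinearMap.comp_apply, LinearMap.smul_apply, sugawara_eD hT]
      simp [eD, hTS]

theorem isLowerSet_maya {S : Finset ℕ} (h : inversions S = ∅) : IsLowerSet (maya S) := by
  intro p q hqp hp
  by_contra hq
  have hlt : q < p := hqp.lt_of_ne fun hqp => hq (hqp ▸ hp)
  exact Finset.notMem_empty _ (h ▸ mem_inversions.2 ⟨hlt, hp, hq⟩)

theorem eq_of_inversions_eq_empty {S T : Finset ℕ} (hchg : chg S = chg T)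
    (hS : inversions S = ∅) (hT : inversions T = ∅) : S = T :=
  ((isLowerSet_maya hS).total (isLowerSet_maya hT)).elim (eq_of_maya_subset hchg)
    fun h => (eq_of_maya_subset hchg.symm h).symm

end Inversions

section Irreducibility

variable {W : Submodule ℂ FockD} {n : ℤ}

theorem exists_mem_forall_hD_eq_zero (hle : W ≤ FockComp n) (hinv : ∀ m, ∀ x ∈ W, hD m x ∈ W)
    (hne : W ≠ ⊥) : ∃ w ∈ W, w ≠ 0 ∧ ∀ m > 0, hD m w = 0 := by
  obtain ⟨x, hxW, hx0⟩ := Submodule.exists_mem_ne_zero_of_ne_bot hne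
  obtain ⟨d, hd⟩ := exists_mem_boundedEnergy (hle hxW)
  induction d using Nat.strong_induction_on generalizing x with
  | _ d ih =>
    by_cases hkill : ∀ m > 0, hD m x = 0
    · exact ⟨x, hxW, hx0, hkill⟩
    push Not at hkill
    obtain ⟨m, hm, hmx⟩ := hkill
    have hmem := hD_mem_boundedEnergy hm.ne' hd
    obtain ⟨e, he⟩ : ∃ e : ℕ, d - 4 * m = e :=
      Int.eq_ofNat_of_zero_le (not_lt.1 fun h => hmx (eq_zero_of_mem_boundedEnergy h hmem))
    exact ih e (by omega) (hD m x) (hinv m x hxW) hmx (he ▸ hmem)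

theorem inversions_eq_empty_of_hD_eq_zero {w : FockD} (hw : w ∈ FockComp n)
    (hkill : ∀ m > 0, hD m w = 0) {S : Finset ℕ} (hS : w S ≠ 0) : inversions S = ∅ := by
  obtain ⟨d, hd⟩ := exists_mem_boundedEnergy hw
  have hzero : sugawara d w = 0 := by
    rw [← sum_hD_neg_hD hd]
    refine Finset.sum_eq_zero fun m hm => ?_
    rw [hkill m (Finset.mem_Ioo.1 hm).1, hD_zero]
  have hcard := sugawara_apply hd S
  simpa [hzero, hS] using hcard

theorem exists_eD_mem_inversions_eq_empty (hle : W ≤ FockComp n)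
    (hinv : ∀ m, ∀ x ∈ W, hD m x ∈ W) (hne : W ≠ ⊥) :
    ∃ S, chg S = n ∧ inversions S = ∅ ∧ eD S ∈ W := by
  obtain ⟨w, hwW, hw0, hkill⟩ := exists_mem_forall_hD_eq_zero hle hinv hne
  obtain ⟨S, hS⟩ := Finsupp.ne_iff.1 hw0
  have hchg {T : Finset ℕ} (hT : w T ≠ 0) : chg T = n := by
    have hw := hle hwW
    rw [fockComp_eq_supported] at hw
    exact hw (Finsupp.mem_support_iff.2 hT)
  have hinvs {T : Finset ℕ} (hT : w T ≠ 0) : inversions T = ∅ :=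
    inversions_eq_empty_of_hD_eq_zero (hle hwW) hkill hT
  have hw : w = w S • eD S := by
    ext T
    obtain rfl | hTS := eq_or_ne T S
    · simp [eD]
    · have hT : w T = 0 := by
        by_contra hT
        exact hTS (eq_of_inversions_eq_empty (by rw [hchg hT, hchg hS]) (hinvs hT) (hinvs hS))
      simp [eD, hT, hTS]
  rw [hw] at hwW
  exact ⟨S, hchg hS, hinvs hS, (Submodule.smul_mem_iff _ hS).1 hwW⟩

theorem eD_mem_of_forall_energy_lt (hinv : ∀ m, ∀ x ∈ W, hD m x ∈ W) {S : Finset ℕ}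
    (hS : inversions S ≠ ∅) (h : ∀ T, energy T < energy S → chg T = chg S → eD T ∈ W) :
    eD S ∈ W := by
  have hcard : ((inversions S).card : ℂ) ≠ 0 := by simpa using hS
  have hmem : eD S ∈ boundedEnergy (energy S) (chg S) := eD_mem_boundedEnergy le_rfl rfl
  rw [← Submodule.smul_mem_iff W hcard, Nat.cast_smul_eq_nsmul, ← sugawara_eD le_rfl,
    ← sum_hD_neg_hD hmem]
  refine Submodule.sum_mem _ fun m hm => hinv _ _ ?_
  have hm0 := (Finset.mem_Ioo.1 hm).1
  refine boundedEnergy_le_iff.2 (fun T hT hc => h T ?_ hc) (hD_mem_boundedEnergy hm0.ne' hmem)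
  omega

theorem eD_mem_of_eD_mem (hinv : ∀ m, ∀ x ∈ W, hD m x ∈ W) {S₀ : Finset ℕ}
    (hS₀ : inversions S₀ = ∅) (hmem : eD S₀ ∈ W) {S : Finset ℕ} (hchg : chg S = chg S₀) :
    eD S ∈ W := by
  induction hd : energy S using Nat.strong_induction_on generalizing S with
  | _ d ih =>
    subst hd
    by_cases hS : inversions S = ∅
    · rwa [eq_of_inversions_eq_empty hchg hS hS₀]
    · exact eD_mem_of_forall_energy_lt hinv hS fun T hT hc => ih _ hT (hc.trans hchg) rfl

end Irreducibility

end FockD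

/-- Each charge component `F_{(n)}` is irreducible under the Heisenberg action: any nonzero
subspace of `F_{(n)}` invariant under all `h_m` is all of `F_{(n)}`. -/
theorem charge_component_irreducible (n : ℤ) (W : Submodule ℂ FockD)
    (hle : W ≤ FockComp n) (hinv : ∀ m : ℤ, ∀ x ∈ W, hD m x ∈ W) (hne : W ≠ ⊥) :
    W = FockComp n := by
  obtain ⟨S₀, hchg, hS₀, hmem⟩ := FockD.exists_eD_mem_inversions_eq_empty hle hinv hne
  refine le_antisymm hle (Submodule.span_le.2 ?_)
  rintro _ ⟨S, hS, rfl⟩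
  exact FockD.eD_mem_of_eD_mem hinv hS₀ hmem (hS.trans hchg.symm)
end
end
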